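/- Let q > 1 and let 0 < κ₁ < κ₂ be real numbers. Then there exists a solution u to Δ²u + u^{−q} = 0 in ℝ³ with u > 0, such that u is not radially symmetric about any point, and liminf_{|x|→∞} u(x)/|x|² = κ₁ and limsup_{|x|→∞} u(x)/|x|² = κ₂. -/

import Mathlib

open MeasureTheory Filter Topology Real

/-- The Laplacian of a function on ℝ³. -/
noncomputable def laplacian (u : EuclideanSpace ℝ (Fin 3) → ℝ) (x : EuclideanSpace ℝ (Fin 3)) : ℝ :=
  ∑ i : Fin 3, iteratedFDeriv ℝ 2 u x ![EuclideanSpace.single i 1, EuclideanSpace.single i 1]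

/-!
Fix a unit vector `e` and the quadratic form `Q x = κ₁ |x|² + (κ₂ - κ₁) ⟪e, x⟫²`, which is
biharmonic, varies between `κ₁ |x|²` and `κ₂ |x|²`, and is not radial. The solution is a
perturbation of `Q`: it solves the integral equation `u = M + Q + c⁻¹ W (u ^ (-q))`, where `W f x =
∫ K x y f y dy`, `K x y` is `|x - y|` minus its first order Taylor polynomial in `x` at `0`, and `c
> 0` is the constant with `Δ² |x| = -c δ` (so that `Δ² W f = -c f`).

The subtraction makes `0 ≤ K x y ≤ |x|² / (2 |y|)`, so `W f` is defined as soon as `f y / |y|` is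
integrable, which for `f = u ^ (-q)` and `u ≥ m (1 + |y|²)` is exactly where `q > 1` enters; for
`M` large the right-hand side of the integral equation is then a contraction for a weighted sup
norm. For regularity one cuts `f` into a compactly supported part, whose potential is a convolution
of the Lipschitz function `|x|`, and a part vanishing near the point considered, whose potential
involves only smooth values of the kernel. Finally `W f x = o(|x|²)` by dominated convergence, so
`u` has the anisotropic growth of `Q`: comparing two directions excludes radial symmetry about any
point, and the extreme values of `Q` on the sphere are the lower and upper limits of `u x / |x|²`.
-/

universe u

open scoped Laplacian RealInnerProductSpace

local notation "ℝ³" => EuclideanSpace ℝ (Fin 3)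

section Derivatives

variable {E F : Type*} [NormedAddCommGroup E] [NormedSpace ℝ E]
  [NormedAddCommGroup F] [NormedSpace ℝ F] {f : E → F}

theorem fderiv_comp_const_sub (w : E → F)
    (x : E) : fderiv ℝ (fun z ↦ w (x - z)) = fun z ↦ -fderiv ℝ w (x - z) := by
  ext1 z
  have h := fderiv_comp_smul (𝕜 := ℝ) (f := fun t ↦ w (x + t)) (x := z) (-1)
  simpa only [neg_smul, one_smul, ← sub_eq_add_neg, fderiv_comp_add_left] using h

theorem contDiff_fderiv_apply {n : WithTop ℕ∞} (hf : ContDiff ℝ (n + 1) f) (w : E) :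
    ContDiff ℝ n fun z ↦ fderiv ℝ f z w :=
  (hf.fderiv_right le_rfl).clm_apply contDiff_const

theorem fderiv_fderiv_apply (hf : ContDiff ℝ 2 f) (z w : E) :
    fderiv ℝ (fderiv ℝ f) z w w = fderiv ℝ (fun x ↦ fderiv ℝ f x w) z w := by
  have hf' : Differentiable ℝ (fderiv ℝ f) :=
    (hf.fderiv_right (m := 1) le_rfl).differentiable one_ne_zero
  simp [fderiv_clm_apply (hf' z) (differentiableAt_const w)]

end Derivatives

section Laplacian

variable {E : Type*} [NormedAddCommGroup E] [InnerProductSpace ℝ E] [FiniteDimensional ℝ E]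

/-- The trace of a bilinear form on a Euclidean space, as a continuous linear map. The Laplacian of
`u` is the trace of `fderiv ℝ (fderiv ℝ u)`. -/
noncomputable def traceForm : (E →L[ℝ] E →L[ℝ] ℝ) →L[ℝ] ℝ :=
  ∑ i, (ContinuousLinearMap.apply ℝ ℝ (stdOrthonormalBasis ℝ E i)).comp
    (ContinuousLinearMap.apply ℝ (E →L[ℝ] ℝ) (stdOrthonormalBasis ℝ E i))

theorem traceForm_apply (B : E →L[ℝ] E →L[ℝ] ℝ) :
    traceForm B = ∑ i, B (stdOrthonormalBasis ℝ E i) (stdOrthonormalBasis ℝ E i) := by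
  simp [traceForm]

theorem traceForm_innerSL : traceForm (innerSL ℝ (E := E)) = Module.finrank ℝ E := by
  simp [traceForm_apply, innerSL_apply_apply ℝ]

theorem traceForm_smulRight_innerSL (ℓ : E →L[ℝ] ℝ) (z : E) :
    traceForm (ℓ.smulRight (innerSL ℝ z)) = ℓ z := by
  conv_rhs => rw [← (stdOrthonormalBasis ℝ E).sum_repr' z]
  simp [traceForm_apply, innerSL_apply_apply, real_inner_comm, mul_comm]

theorem laplacian_eq_traceForm (u : E → ℝ) :
    Δ u = fun x ↦ traceForm (fderiv ℝ (fderiv ℝ u) x) := by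
  ext x
  simp [InnerProductSpace.laplacian_eq_iteratedFDeriv_stdOrthonormalBasis, traceForm_apply,
    iteratedFDeriv_two_apply]

theorem laplacian_eq_mathlib_laplacian (u : ℝ³ → ℝ) : laplacian u = Δ u := by
  ext x
  simp [laplacian, InnerProductSpace.laplacian_eq_iteratedFDeriv_orthonormalBasis u
    (EuclideanSpace.basisFun (Fin 3) ℝ)]

variable {u v : E → ℝ}

theorem contDiff_laplacian {n : WithTop ℕ∞} (hu : ContDiff ℝ (n + 2) u) : ContDiff ℝ n (Δ u) := by
  rw [laplacian_eq_traceForm]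
  have hu' : ContDiff ℝ (n + 1) (fderiv ℝ u) :=
    hu.fderiv_right (by rw [add_assoc, one_add_one_eq_two])
  exact traceForm.contDiff.comp (hu'.fderiv_right le_rfl)

theorem hasCompactSupport_laplacian (hu : HasCompactSupport u) : HasCompactSupport (Δ u) := by
  rw [laplacian_eq_traceForm]
  exact ((hu.fderiv ℝ).fderiv ℝ).comp_left (map_zero traceForm)

theorem laplacian_comp_const_sub (u : E → ℝ) (x : E) :
    Δ (fun z ↦ u (x - z)) = fun z ↦ Δ u (x - z) := by
  ext z
  simp only [laplacian_eq_traceForm, fderiv_comp_const_sub, fderiv_fun_neg, neg_neg]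

theorem laplacian_bilinear (B : E →L[ℝ] E →L[ℝ] ℝ) :
    Δ (fun x ↦ B x x) = fun _ ↦ traceForm (B + B.flip) := by
  have h : fderiv ℝ (fun x ↦ B x x) = ⇑(B + B.flip) := by
    ext x y
    rw [(B.hasFDerivAt.clm_apply (hasFDerivAt_id x) : HasFDerivAt (fun x ↦ B x x) _ x).fderiv]
    simp
  ext x
  simp only [laplacian_eq_traceForm, h, ContinuousLinearMap.fderiv]

theorem laplacian_laplacian_bilinear (B : E →L[ℝ] E →L[ℝ] ℝ) : Δ (Δ fun x ↦ B x x) = 0 := by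
  rw [laplacian_bilinear, InnerProductSpace.laplacian_const]

end Laplacian

section GreenIdentity

variable {E : Type*} [NormedAddCommGroup E] [InnerProductSpace ℝ E] [FiniteDimensional ℝ E]
  [MeasurableSpace E] [BorelSpace E] {f v : E → ℝ}

theorem integral_mul_fderiv_apply_comm (hf : ContDiff ℝ 1 f) (hv : ContDiff ℝ 1 v)
    (hc : HasCompactSupport v) (w : E) :
    ∫ z, f z * fderiv ℝ v z w = -∫ z, fderiv ℝ f z w * v z := by
  have hf' : Continuous fun z ↦ fderiv ℝ f z w :=
    (hf.continuous_fderiv one_ne_zero).clm_apply continuous_const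
  have hv' : Continuous fun z ↦ fderiv ℝ v z w :=
    (hv.continuous_fderiv one_ne_zero).clm_apply continuous_const
  exact integral_mul_fderiv_eq_neg_fderiv_mul_of_integrable
    ((hf'.mul hv.continuous).integrable_of_hasCompactSupport hc.mul_left)
    ((hf.continuous.mul hv').integrable_of_hasCompactSupport (hc.fderiv_apply ℝ w).mul_left)
    ((hf.continuous.mul hv.continuous).integrable_of_hasCompactSupport hc.mul_left)
    (fun z _ ↦ hf.differentiable one_ne_zero z) (fun z _ ↦ hv.differentiable one_ne_zero z)

theorem integral_mul_laplacian_comm (hf : ContDiff ℝ 2 f) (hv : ContDiff ℝ 2 v)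
    (hc : HasCompactSupport v) : ∫ z, f z * Δ v z = ∫ z, Δ f z * v z := by
  have hf' := contDiff_fderiv_apply (n := 1) hf
  have hv' := contDiff_fderiv_apply (n := 1) hv
  have integral_comm (w : E) : ∫ z, f z * fderiv ℝ (fderiv ℝ v) z w w =
      ∫ z, fderiv ℝ (fderiv ℝ f) z w w * v z := by
    simp only [fderiv_fderiv_apply hf, fderiv_fderiv_apply hv]
    rw [integral_mul_fderiv_apply_comm (hf.of_le one_le_two) (hv' w) (hc.fderiv_apply ℝ w),
      integral_mul_fderiv_apply_comm (hf' w) (hv.of_le one_le_two) hc, neg_neg]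
  simp only [laplacian_eq_traceForm, traceForm_apply, Finset.mul_sum, Finset.sum_mul]
  rw [integral_finsetSum, integral_finsetSum]
  · exact Finset.sum_congr rfl fun i _ ↦ integral_comm _
  all_goals
    intro i _
    simp only [fderiv_fderiv_apply hf, fderiv_fderiv_apply hv]
    refine Continuous.integrable_of_hasCompactSupport ?_ ?_
  · exact (contDiff_fderiv_apply (n := 0) (hf' _) _).continuous.mul hv.continuous
  · exact hc.mul_left
  · exact hf.continuous.mul (contDiff_fderiv_apply (n := 0) (hv' _) _).continuous
  · exact ((hc.fderiv_apply ℝ _).fderiv_apply ℝ _).mul_left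

theorem integral_mul_bilaplacian_comm (hf : ContDiff ℝ 4 f) (hv : ContDiff ℝ 4 v)
    (hc : HasCompactSupport v) : ∫ z, f z * Δ (Δ v) z = ∫ z, Δ (Δ f) z * v z := by
  have hf₂ : ContDiff ℝ 2 (Δ f) := contDiff_laplacian (hf.of_le (by norm_num))
  have hv₂ : ContDiff ℝ 2 (Δ v) := contDiff_laplacian (hv.of_le (by norm_num))
  rw [integral_mul_laplacian_comm (hf.of_le (by norm_num)) hv₂ (hasCompactSupport_laplacian hc),
    integral_mul_laplacian_comm hf₂ (hv.of_le (by norm_num)) hc]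

end GreenIdentity

section NormPowers

theorem eventually_norm_sq_add_pos {E : Type*} [SeminormedAddGroup E]
    {a : ℝ} {z : E} (hz : 0 < ‖z‖ ^ 2 + a) :
    ∀ᶠ y : E in 𝓝 z, 0 < ‖y‖ ^ 2 + a :=
  Tendsto.eventually_const_lt hz (Continuous.tendsto (by fun_prop) z)

variable {E : Type*} [NormedAddCommGroup E] [InnerProductSpace ℝ E]

theorem hasFDerivAt_norm_sq_add_rpow (a r : ℝ) {z : E} (hz : 0 < ‖z‖ ^ 2 + a) :
    HasFDerivAt (fun z : E ↦ (‖z‖ ^ 2 + a) ^ r)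
      ((2 * r * (‖z‖ ^ 2 + a) ^ (r - 1)) • innerSL ℝ z) z := by
  have h := ((hasStrictFDerivAt_norm_sq z).hasFDerivAt.add_const a).rpow_const (p := r)
    (Or.inl hz.ne')
  refine h.congr_fderiv ?_
  rw [← Nat.cast_smul_eq_nsmul ℝ, smul_smul]
  congr 1
  push_cast
  ring

theorem contDiffAt_norm_sq_add_rpow (a r : ℝ) {z : E} (hz : 0 < ‖z‖ ^ 2 + a)
    {n : WithTop ℕ∞} : ContDiffAt ℝ n (fun z : E ↦ (‖z‖ ^ 2 + a) ^ r) z :=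
  ((contDiff_norm_sq ℝ).contDiffAt.add contDiffAt_const).rpow_const_of_ne hz.ne'

theorem laplacian_norm_sq_add_rpow [FiniteDimensional ℝ E] (a r : ℝ) {z : E}
    (hz : 0 < ‖z‖ ^ 2 + a) :
    Δ (fun z : E ↦ (‖z‖ ^ 2 + a) ^ r) z =
      2 * r * (2 * r - 2 + Module.finrank ℝ E) * (‖z‖ ^ 2 + a) ^ (r - 1)
        - 4 * r * (r - 1) * a * (‖z‖ ^ 2 + a) ^ (r - 2) := by
  have gradient : fderiv ℝ (fun z : E ↦ (‖z‖ ^ 2 + a) ^ r) =ᶠ[𝓝 z]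
      fun z ↦ (2 * r * (‖z‖ ^ 2 + a) ^ (r - 1)) • innerSL ℝ z := by
    filter_upwards [eventually_norm_sq_add_pos hz] with y hy
      using (hasFDerivAt_norm_sq_add_rpow a r hy).fderiv
  have hessian := ((hasFDerivAt_norm_sq_add_rpow a (r - 1) hz).const_mul (2 * r)).fun_smul
    (innerSL ℝ (E := E)).hasFDerivAt
  have trace := traceForm_smulRight_innerSL
    ((2 * r) • (2 * (r - 1) * (‖z‖ ^ 2 + a) ^ (r - 1 - 1)) • innerSL ℝ z) z
  have power : (‖z‖ ^ 2 + a) ^ (r - 1) = (‖z‖ ^ 2 + a) * (‖z‖ ^ 2 + a) ^ (r - 2) := by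
    rw [show r - 1 = 1 + (r - 2) by ring, rpow_add hz, rpow_one]
  simp only [laplacian_eq_traceForm, gradient.fderiv_eq]
  rw [hessian.fderiv, map_add, map_smul, traceForm_innerSL, trace]
  simp only [smul_apply, innerSL_apply_apply ℝ, real_inner_self_eq_norm_sq,
    smul_eq_mul, show r - 1 - 1 = r - 2 by ring, power]
  ring

/-- In dimension three `‖·‖` is biharmonic away from the origin (the case `a = 0`); the positive
values of `a` give smooth approximations of it. -/
theorem laplacian_laplacian_sqrt_norm_sq_add (a : ℝ) {z : ℝ³} (hz : 0 < ‖z‖ ^ 2 + a) :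
    Δ (Δ fun z : ℝ³ ↦ √(‖z‖ ^ 2 + a)) z = -(15 * a ^ 2 * (‖z‖ ^ 2 + a) ^ (-7 / 2 : ℝ)) := by
  simp only [sqrt_eq_rpow]
  have h : Δ (fun z : ℝ³ ↦ (‖z‖ ^ 2 + a) ^ (1 / 2 : ℝ)) =ᶠ[𝓝 z]
      (2 : ℝ) • (fun z ↦ (‖z‖ ^ 2 + a) ^ (-1 / 2 : ℝ))
        + a • fun z ↦ (‖z‖ ^ 2 + a) ^ (-3 / 2 : ℝ) := by
    filter_upwards [eventually_norm_sq_add_pos hz] with y hy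
    rw [laplacian_norm_sq_add_rpow a _ hy]
    norm_num
  have smooth (r : ℝ) : ContDiffAt ℝ 2 (fun z : ℝ³ ↦ (‖z‖ ^ 2 + a) ^ r) z :=
    contDiffAt_norm_sq_add_rpow a r hz
  have smooth_smul (c r : ℝ) : ContDiffAt ℝ 2 (c • fun z : ℝ³ ↦ (‖z‖ ^ 2 + a) ^ r) z :=
    (smooth r).const_smul c
  rw [(InnerProductSpace.laplacian_congr_nhds h).eq_of_nhds,
    (smooth_smul _ _).laplacian_add (smooth_smul _ _),
    InnerProductSpace.laplacian_smul _ (smooth _), InnerProductSpace.laplacian_smul _ (smooth _),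
    laplacian_norm_sq_add_rpow a _ hz, laplacian_norm_sq_add_rpow a _ hz]
  norm_num
  ring

end NormPowers

section FundamentalSolution

/-- The constant `c₀ = 8π` for which `-‖·‖ / c₀` is a fundamental solution of `Δ²` in dimension
three, written as the mass of the approximate identity `-Δ² √(‖·‖² + ε²)`. -/
noncomputable def biharmonicConst : ℝ := ∫ t : ℝ³, 15 * (1 + ‖t‖ ^ 2) ^ (-7 / 2 : ℝ)

theorem integrable_mollifier : Integrable fun t : ℝ³ ↦ 15 * (1 + ‖t‖ ^ 2) ^ (-7 / 2 : ℝ) :=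
  (integrable_rpow_neg_one_add_norm_sq (by simp; norm_num)).const_mul 15

theorem continuous_mollifier : Continuous fun t : ℝ³ ↦ 15 * (1 + ‖t‖ ^ 2) ^ (-7 / 2 : ℝ) :=
  continuous_const.mul (Continuous.rpow_const (by fun_prop) fun _ ↦ Or.inl (by positivity))

theorem biharmonicConst_pos : 0 < biharmonicConst :=
  integral_pos_of_integrable_nonneg_nonzero continuous_mollifier integrable_mollifier
    (fun t ↦ by positivity) (x := 0) (by simp)

variable {v : ℝ³ → ℝ}

theorem integral_sqrt_norm_sq_add_mul_bilaplacian (hv : ContDiff ℝ 4 v) (hc : HasCompactSupport v)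
    {ε : ℝ} (hε : 0 < ε) :
    ∫ z, √(‖z‖ ^ 2 + ε ^ 2) * Δ (Δ v) z =
      -∫ t : ℝ³, 15 * (1 + ‖t‖ ^ 2) ^ (-7 / 2 : ℝ) * v (ε • t) := by
  have hpos (z : ℝ³) : 0 < ‖z‖ ^ 2 + ε ^ 2 := by positivity
  have rescale (t : ℝ³) :
      -(15 * (ε ^ 2) ^ 2 * (‖ε • t‖ ^ 2 + ε ^ 2) ^ (-7 / 2 : ℝ)) * v (ε • t) =
        (ε ^ 3)⁻¹ * (-(15 * (1 + ‖t‖ ^ 2) ^ (-7 / 2 : ℝ) * v (ε • t))) := by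
    have hnorm : ‖ε • t‖ ^ 2 + ε ^ 2 = ε ^ 2 * (1 + ‖t‖ ^ 2) := by
      rw [norm_smul, Real.norm_of_nonneg hε.le]
      ring
    have hpow : (ε ^ 2) ^ (-7 / 2 : ℝ) = (ε ^ 7)⁻¹ := by
      rw [← rpow_natCast, ← rpow_mul hε.le, ← rpow_natCast, ← rpow_neg hε.le]
      norm_num
    rw [hnorm, mul_rpow (by positivity) (by positivity), hpow]
    field_simp
  have scaled := Measure.integral_comp_smul (volume : Measure ℝ³)
    (fun z ↦ -(15 * (ε ^ 2) ^ 2 * (‖z‖ ^ 2 + ε ^ 2) ^ (-7 / 2 : ℝ)) * v z) ε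
  simp only [rescale, finrank_euclideanSpace, Fintype.card_fin, smul_eq_mul] at scaled
  rw [integral_const_mul, integral_neg, abs_of_pos (by positivity)] at scaled
  rw [integral_mul_bilaplacian_comm
    (((contDiff_norm_sq ℝ).add contDiff_const).sqrt fun z ↦ (hpos z).ne') hv hc]
  simp only [laplacian_laplacian_sqrt_norm_sq_add _ (hpos _)]
  exact (mul_left_cancel₀ (by positivity) scaled).symm

theorem tendsto_integral_sqrt_norm_sq_add_mul {E : Type*} [NormedAddCommGroup E]
    [MeasurableSpace E] [BorelSpace E] {μ : Measure E} [IsFiniteMeasureOnCompacts μ] {g : E → ℝ}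
    (hg : Continuous g) (hc : HasCompactSupport g) :
    Tendsto (fun ε : ℝ ↦ ∫ z, √(‖z‖ ^ 2 + ε ^ 2) * g z ∂μ) (𝓝[>] 0)
      (𝓝 (∫ z, ‖z‖ * g z ∂μ)) := by
  refine tendsto_integral_filter_of_dominated_convergence (fun z ↦ ‖(‖z‖ + 1) * g z‖) ?_ ?_ ?_ ?_
  · exact Eventually.of_forall fun ε ↦ Continuous.aestronglyMeasurable (by fun_prop)
  · filter_upwards [Ioo_mem_nhdsGT one_pos] with ε ⟨hε₀, hε₁⟩
    refine Eventually.of_forall fun z ↦ ?_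
    rw [norm_mul, norm_mul]
    gcongr
    rw [Real.norm_of_nonneg (by positivity), Real.norm_of_nonneg (by positivity),
      sqrt_le_left (by positivity)]
    nlinarith [norm_nonneg z]
  · exact (Continuous.integrable_of_hasCompactSupport (by fun_prop) hc.mul_left).norm
  · refine Eventually.of_forall fun z ↦ ?_
    have h : Continuous fun ε : ℝ ↦ √(‖z‖ ^ 2 + ε ^ 2) * g z := by fun_prop
    simpa using (h.tendsto 0).mono_left nhdsWithin_le_nhds

theorem tendsto_integral_mul_comp_smul {E : Type*} [NormedAddCommGroup E] [NormedSpace ℝ E]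
    [MeasurableSpace E] [BorelSpace E] {μ : Measure E} {w v : E → ℝ} (hw : Integrable w μ)
    (hv : Continuous v) (hc : HasCompactSupport v) :
    Tendsto (fun ε : ℝ ↦ ∫ t, w t * v (ε • t) ∂μ) (𝓝[>] 0) (𝓝 ((∫ t, w t ∂μ) * v 0)) := by
  obtain ⟨C, hC⟩ := hc.exists_bound_of_continuous hv
  rw [← integral_mul_const]
  refine tendsto_integral_filter_of_dominated_convergence (fun t ↦ ‖w t‖ * C) ?_ ?_
    (hw.norm.mul_const C) ?_
  · exact Eventually.of_forall fun ε ↦ hw.1.mul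
      (Continuous.aestronglyMeasurable (by fun_prop))
  · refine Eventually.of_forall fun ε ↦ Eventually.of_forall fun t ↦ ?_
    rw [norm_mul]
    gcongr
    exact hC _
  · refine Eventually.of_forall fun t ↦ ?_
    have h : Continuous fun ε : ℝ ↦ w t * v (ε • t) := by fun_prop
    simpa using (h.tendsto 0).mono_left nhdsWithin_le_nhds

theorem integral_norm_mul_bilaplacian (hv : ContDiff ℝ 4 v) (hc : HasCompactSupport v) :
    ∫ z, ‖z‖ * Δ (Δ v) z = -(biharmonicConst * v 0) := by
  have hv₂ : ContDiff ℝ 2 (Δ v) := contDiff_laplacian (hv.of_le (by norm_num))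
  have hv₄ : Continuous (Δ (Δ v)) := (contDiff_laplacian (n := 0) hv₂).continuous
  refine tendsto_nhds_unique (tendsto_integral_sqrt_norm_sq_add_mul hv₄
    (hasCompactSupport_laplacian (hasCompactSupport_laplacian hc)))
    ((tendsto_integral_mul_comp_smul integrable_mollifier hv.continuous hc).neg.congr' ?_)
  filter_upwards [self_mem_nhdsWithin] with ε hε
    using (integral_sqrt_norm_sq_add_mul_bilaplacian hv hc hε).symm

end FundamentalSolution

section LocalDomination

variable {α E G : Type*} [MeasurableSpace α] {μ : Measure α} [NormedAddCommGroup E]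
  [NormedSpace ℝ E] [NormedAddCommGroup G] [NormedSpace ℝ G]

/-- The functions `F x`, for `x` in a ball, have a common integrable bound: the hypothesis under
which integrals depending on the parameter `x` are continuous and may be differentiated. -/
def LocallyDominated (μ : Measure α) (F : E → α → G) : Prop :=
  ∀ R : ℝ, ∃ b : α → ℝ, Integrable b μ ∧ ∀ x y, ‖x‖ ≤ R → ‖F x y‖ ≤ b y

namespace LocallyDominated

variable {F : E → α → G} {F' : E → α → E →L[ℝ] G}

omit [NormedSpace ℝ E] [NormedSpace ℝ G] in
theorem integrable (hF : LocallyDominated μ F) (hm : ∀ x, AEStronglyMeasurable (F x) μ) (x : E) :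
    Integrable (F x) μ := by
  obtain ⟨b, hb, hFb⟩ := hF ‖x‖
  exact hb.mono' (hm x) (Eventually.of_forall fun y ↦ hFb x y le_rfl)

omit [NormedSpace ℝ E] in
theorem continuous_integral (hF : LocallyDominated μ F)
    (hm : ∀ x, AEStronglyMeasurable (F x) μ) (hc : ∀ y, Continuous fun x ↦ F x y) :
    Continuous fun x ↦ ∫ y, F x y ∂μ := by
  refine continuous_iff_continuousAt.2 fun x ↦ ?_
  obtain ⟨b, hb, hFb⟩ := hF (‖x‖ + 1)
  refine continuousAt_of_dominated (Eventually.of_forall hm) ?_ hb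
    (Eventually.of_forall fun y ↦ (hc y).continuousAt)
  filter_upwards [(continuous_norm.tendsto x).eventually_lt_const (lt_add_one ‖x‖)] with z hz
  exact Eventually.of_forall fun y ↦ hFb z y hz.le

theorem of_hasFDerivAt (hF' : LocallyDominated μ F')
    (hd : ∀ x y, HasFDerivAt (fun x ↦ F x y) (F' x y) x) (hi : Integrable (F 0) μ) :
    LocallyDominated μ F := by
  intro R
  obtain ⟨b, hb, hFb⟩ := hF' R
  refine ⟨fun y ↦ ‖F 0 y‖ + b y * R, hi.norm.add (hb.mul_const R), fun x y hx ↦ ?_⟩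
  have hR : 0 ≤ R := (norm_nonneg x).trans hx
  have hb₀ : 0 ≤ b y := (norm_nonneg _).trans (hFb 0 y (by simpa using hR))
  have mean_value : ‖F x y - F 0 y‖ ≤ b y * ‖x - 0‖ :=
    Convex.norm_image_sub_le_of_norm_hasFDerivWithin_le (𝕜 := ℝ) (s := Metric.closedBall 0 R)
      (fun z _ ↦ (hd z y).hasFDerivWithinAt) (fun z hz ↦ hFb z y (by simpa using hz))
      (convex_closedBall _ _) (by simpa using hR) (by simpa using hx)
  calc ‖F x y‖ ≤ ‖F 0 y‖ + ‖F x y - F 0 y‖ := norm_le_norm_add_norm_sub' _ _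
    _ ≤ ‖F 0 y‖ + b y * ‖x - 0‖ := by gcongr
    _ ≤ ‖F 0 y‖ + b y * R := by rw [sub_zero]; gcongr

theorem hasFDerivAt_integral (hF' : LocallyDominated μ F')
    (hm : ∀ x, AEStronglyMeasurable (F x) μ) (hm' : ∀ x, AEStronglyMeasurable (F' x) μ)
    (hd : ∀ x y, HasFDerivAt (fun x ↦ F x y) (F' x y) x) (hi : Integrable (F 0) μ) (x : E) :
    HasFDerivAt (fun x ↦ ∫ y, F x y ∂μ) (∫ y, F' x y ∂μ) x := by
  obtain ⟨b, hb, hFb⟩ := hF' (‖x‖ + 1)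
  refine hasFDerivAt_integral_of_dominated_of_fderiv_le (Metric.ball_mem_nhds x one_pos)
    (Eventually.of_forall hm) ((hF'.of_hasFDerivAt hd hi).integrable hm x) (hm' x)
    (Eventually.of_forall fun y z hz ↦ hFb z y ?_) hb
    (Eventually.of_forall fun y z _ ↦ hd z y)
  have hz : ‖z - x‖ < 1 := by simpa [dist_eq_norm] using hz
  linarith [norm_le_norm_add_norm_sub' z x]

end LocallyDominated

end LocalDomination

section Convolution

theorem hasFDerivAt_smul_comp_sub {E G : Type*} [NormedAddCommGroup E]
    [NormedSpace ℝ E] [NormedAddCommGroup G] [NormedSpace ℝ G] {k : E → G}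
    (hk : Differentiable ℝ k) (c : ℝ) (x y : E) :
    HasFDerivAt (fun x ↦ c • k (x - y)) (c • fderiv ℝ k (x - y)) x :=
  ((hk _).hasFDerivAt.comp x ((hasFDerivAt_id x).sub_const y)).const_smul c

variable {E G : Type u} [NormedAddCommGroup E] [NormedSpace ℝ E] [MeasurableSpace E]
  [BorelSpace E] [SecondCountableTopology E] {μ : Measure E}
  [NormedAddCommGroup G] [NormedSpace ℝ G] {n : ℕ} {a : E → ℝ} {k : E → G}

/-- The convolution of `a` with each of the first `n` derivatives of `k` is locally dominated, so
that `a ⋆ k` is of class `Cⁿ`. -/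
def DominatedConvolution (μ : Measure E) (n : ℕ) (a : E → ℝ) (k : E → G) : Prop :=
  ∀ j ≤ n, LocallyDominated μ fun x y ↦ a y • iteratedFDeriv ℝ j k (x - y)

omit [NormedSpace ℝ E] in
theorem aestronglyMeasurable_smul_comp_const_sub (ha : AEStronglyMeasurable a μ)
    (hk : Continuous k) (x : E) : AEStronglyMeasurable (fun y ↦ a y • k (x - y)) μ :=
  ha.smul (Continuous.aestronglyMeasurable (by fun_prop))

namespace DominatedConvolution

omit [BorelSpace E] [SecondCountableTopology E]

theorem of_le {m : ℕ} (h : DominatedConvolution μ n a k) (hm : m ≤ n) :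
    DominatedConvolution μ m a k := fun j hj ↦ h j (hj.trans hm)

theorem fderiv (h : DominatedConvolution μ (n + 1) a k) :
    DominatedConvolution μ n a (fderiv ℝ k) := by
  intro j hj R
  obtain ⟨b, hb, hab⟩ := h (j + 1) (by omega) R
  refine ⟨b, hb, fun x y hx ↦ ?_⟩
  rw [norm_smul, norm_iteratedFDeriv_fderiv, ← norm_smul]
  exact hab x y hx

theorem locallyDominated (h : DominatedConvolution μ n a k) :
    LocallyDominated μ fun x y ↦ a y • k (x - y) := by
  intro R
  obtain ⟨b, hb, hab⟩ := h 0 n.zero_le R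
  refine ⟨b, hb, fun x y hx ↦ ?_⟩
  rw [norm_smul, ← norm_iteratedFDeriv_zero (𝕜 := ℝ) (f := k), ← norm_smul]
  exact hab x y hx

end DominatedConvolution

theorem integrable_convolution (ha : AEStronglyMeasurable a μ) (hk : Continuous k)
    (h : DominatedConvolution μ n a k) (x : E) : Integrable (fun y ↦ a y • k (x - y)) μ :=
  h.locallyDominated.integrable (aestronglyMeasurable_smul_comp_const_sub ha hk) x

theorem hasFDerivAt_convolution (ha : AEStronglyMeasurable a μ) (hk : ContDiff ℝ 1 k)
    (h : DominatedConvolution μ 1 a k) (x : E) :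
    HasFDerivAt (fun x ↦ ∫ y, a y • k (x - y) ∂μ) (∫ y, a y • fderiv ℝ k (x - y) ∂μ) x :=
  h.fderiv.locallyDominated.hasFDerivAt_integral
    (aestronglyMeasurable_smul_comp_const_sub ha hk.continuous)
    (aestronglyMeasurable_smul_comp_const_sub ha (hk.continuous_fderiv one_ne_zero))
    (fun x y ↦ hasFDerivAt_smul_comp_sub (hk.differentiable one_ne_zero) (a y) x y)
    (integrable_convolution ha hk.continuous h 0) x

theorem contDiff_convolution (ha : AEStronglyMeasurable a μ) (hk : ContDiff ℝ n k)
    (h : DominatedConvolution μ n a k) : ContDiff ℝ n fun x ↦ ∫ y, a y • k (x - y) ∂μ := by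
  induction n generalizing G with
  | zero =>
    have hk := hk.continuous
    exact contDiff_zero.2 (h.locallyDominated.continuous_integral
      (aestronglyMeasurable_smul_comp_const_sub ha hk) fun y ↦ by fun_prop)
  | succ n ih =>
    rw [Nat.cast_succ] at hk ⊢
    exact contDiff_succ_iff_hasFDerivAt.2 ⟨_, ih (hk.fderiv_right le_rfl) h.fderiv,
      hasFDerivAt_convolution ha (hk.of_le le_add_self) (h.of_le (by omega))⟩

end Convolution

section LaplacianConvolution

variable {E : Type} [NormedAddCommGroup E] [InnerProductSpace ℝ E] [FiniteDimensional ℝ E]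
  [MeasurableSpace E] [BorelSpace E] {μ : Measure E} {a k : E → ℝ}

theorem laplacian_convolution (ha : AEStronglyMeasurable a μ) (hk : ContDiff ℝ 2 k)
    (h : DominatedConvolution μ 2 a k) :
    Δ (fun x ↦ ∫ y, a y * k (x - y) ∂μ) = fun x ↦ ∫ y, a y * Δ k (x - y) ∂μ := by
  have hk' : ContDiff ℝ 1 (fderiv ℝ k) := hk.fderiv_right le_rfl
  have gradient : fderiv ℝ (fun x ↦ ∫ y, a y * k (x - y) ∂μ) =
      fun x ↦ ∫ y, a y • fderiv ℝ k (x - y) ∂μ := by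
    ext1 x
    exact (hasFDerivAt_convolution ha (hk.of_le one_le_two) (h.of_le one_le_two) x).fderiv
  ext x
  simp only [laplacian_eq_traceForm, gradient]
  rw [(hasFDerivAt_convolution ha hk' h.fderiv x).fderiv,
    ← traceForm.integral_comp_comm (integrable_convolution ha
      (hk'.continuous_fderiv one_ne_zero) h.fderiv.fderiv x)]
  simp only [map_smul, smul_eq_mul]

end LaplacianConvolution

section CompactSupport

variable {E : Type u} [NormedAddCommGroup E] [NormedSpace ℝ E] [MeasurableSpace E] [BorelSpace E]
  {μ : Measure E}

theorem dominatedConvolution_of_hasCompactSupport [ProperSpace E] {G : Type u}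
    [NormedAddCommGroup G] [NormedSpace ℝ G] {n : ℕ} {a : E → ℝ} {k : E → G}
    (ha : LocallyIntegrable a μ) (hk : ContDiff ℝ n k) (hc : HasCompactSupport k) :
    DominatedConvolution μ n a k := by
  intro j hj R
  have hcj : HasCompactSupport (iteratedFDeriv ℝ j k) := hc.iteratedFDeriv j
  obtain ⟨C, hC⟩ := hcj.exists_bound_of_continuous
    (hk.continuous_iteratedFDeriv (m := j) (by exact_mod_cast hj))
  obtain ⟨r, hr⟩ := hcj.isCompact.isBounded.subset_closedBall 0
  refine ⟨(Metric.closedBall 0 (R + r)).indicator fun y ↦ ‖a y‖ * C, ?_, fun x y hx ↦ ?_⟩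
  · refine IntegrableOn.integrable_indicator ?_ Metric.isClosed_closedBall.measurableSet
    exact (ha.integrableOn_isCompact (isCompact_closedBall 0 (R + r))).norm.mul_const C
  · rw [norm_smul]
    by_cases hy : y ∈ Metric.closedBall 0 (R + r)
    · rw [Set.indicator_of_mem hy]
      gcongr
      exact hC _
    · have hxy : x - y ∉ tsupport (iteratedFDeriv ℝ j k) := fun h ↦ hy <| by
        have hr' : ‖x - y‖ ≤ r := by simpa using hr h
        rw [mem_closedBall_zero_iff]
        linarith [norm_le_norm_add_norm_sub x y]
      rw [Set.indicator_of_notMem hy, image_eq_zero_of_notMem_tsupport hxy, norm_zero, mul_zero]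

variable [FiniteDimensional ℝ E] [μ.IsAddHaarMeasure] {n : ℕ} {g k : E → ℝ} {C : NNReal}

/-- Only the kernel is differentiated, almost everywhere by Rademacher's theorem, so convolution
with a Lipschitz function gains one derivative. -/
theorem hasFDerivAt_integral_mul_of_lipschitzWith (hk : LipschitzWith C k) (hg : Continuous g)
    (hc : HasCompactSupport g) (x : E) :
    HasFDerivAt (fun x ↦ ∫ y, g y * k (x - y) ∂μ) (∫ y, g y • fderiv ℝ k (x - y) ∂μ) x := by
  have hk_cont : Continuous k := hk.continuous
  have reflect : MeasurePreserving (fun y ↦ x - y) μ μ :=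
    Measure.measurePreserving_sub_left μ x
  have differentiable : ∀ᵐ y ∂μ, DifferentiableAt ℝ k (x - y) :=
    reflect.quasiMeasurePreserving.ae hk.ae_differentiableAt
  refine (hasFDerivAt_integral_of_dominated_loc_of_lip (F := fun x y ↦ g y * k (x - y))
    (s := Set.univ) (bound := fun y ↦ ‖g y‖ * C) univ_mem
    (Eventually.of_forall fun x ↦ Continuous.aestronglyMeasurable (by fun_prop))
    (Continuous.integrable_of_hasCompactSupport (by fun_prop) hc.mul_right) ?_ ?_
    ((hg.integrable_of_hasCompactSupport hc).norm.mul_const _) ?_).2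
  · exact (hg.measurable.smul
      ((measurable_fderiv ℝ k).comp reflect.measurable)).aestronglyMeasurable
  · refine Eventually.of_forall fun y ↦ LipschitzWith.lipschitzOnWith ?_
    refine LipschitzWith.of_dist_le_mul fun z w ↦ ?_
    calc dist (g y * k (z - y)) (g y * k (w - y)) = ‖g y‖ * dist (k (z - y)) (k (w - y)) := by
          rw [dist_eq_norm, ← mul_sub, norm_mul, dist_eq_norm]
      _ ≤ ‖g y‖ * (C * dist (z - y) (w - y)) := by gcongr; exact hk.dist_le_mul _ _
      _ = Real.nnabs (‖g y‖ * C) * dist z w := by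
          rw [dist_sub_right, Real.coe_nnabs, abs_of_nonneg (by positivity), mul_assoc]
  · filter_upwards [differentiable] with y hy
    exact (hy.hasFDerivAt.comp x ((hasFDerivAt_id x).sub_const y)).const_mul (g y)

theorem contDiff_integral_mul_of_lipschitzWith (hk : LipschitzWith C k) (hg : ContDiff ℝ n g)
    (hc : HasCompactSupport g) : ContDiff ℝ (n + 1) fun x ↦ ∫ y, g y * k (x - y) ∂μ := by
  have bounded : LocallyIntegrable (fderiv ℝ k) μ :=
    (locallyIntegrable_const (C : ℝ)).mono (measurable_fderiv ℝ k).aestronglyMeasurable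
      (Eventually.of_forall fun z ↦ by simpa using norm_fderiv_le_of_lipschitz ℝ hk)
  have smooth := hc.contDiff_convolution_right (ContinuousLinearMap.lsmul ℝ ℝ).flip bounded
    (n := (n : ℕ∞)) (by exact_mod_cast hg)
  refine contDiff_succ_iff_hasFDerivAt.2 ⟨_, ?_,
    hasFDerivAt_integral_mul_of_lipschitzWith hk hg.continuous hc⟩
  convert (show ContDiff ℝ n _ from mod_cast smooth) using 2 with x
  rw [convolution_def, ← integral_sub_left_eq_self _ μ x]
  simp

end CompactSupport

section InverseDecay

variable {E G H : Type u} [NormedAddCommGroup E] [NormedSpace ℝ E]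
  [NormedAddCommGroup G] [NormedSpace ℝ G] [NormedAddCommGroup H] [NormedSpace ℝ H] {n : ℕ}

/-- The first `n` derivatives of `k` are `O(1 / (1 + ‖z‖))`: the decay of the second derivative of
the norm, which makes its convolution with a weight integrable against `1 / ‖y‖` converge. -/
def InverseDecay (n : ℕ) (k : E → G) : Prop :=
  ∀ j ≤ n, ∃ C : ℝ, ∀ z, ‖iteratedFDeriv ℝ j k z‖ ≤ C * (1 + ‖z‖)⁻¹

omit [NormedSpace ℝ E] in
theorem inv_one_add_norm_sub_le {x : E} {R : ℝ} (hx : ‖x‖ ≤ R) (y : E) :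
    (1 + ‖x - y‖)⁻¹ ≤ (1 + R) * (1 + ‖y‖)⁻¹ := by
  have hR : 0 ≤ R := (norm_nonneg x).trans hx
  rw [← div_eq_mul_inv, inv_le_comm₀ (by positivity) (by positivity), inv_div,
    div_le_iff₀ (by positivity)]
  nlinarith [norm_le_norm_add_norm_sub x y, mul_nonneg hR (norm_nonneg (x - y))]

namespace InverseDecay

theorem clm_comp (L : G →L[ℝ] H) {k : E → G} (hk : InverseDecay n k) (hs : ContDiff ℝ n k) :
    InverseDecay n fun z ↦ L (k z) := by
  intro j hj
  obtain ⟨C, hC⟩ := hk j hj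
  refine ⟨‖L‖ * C, fun z ↦ ?_⟩
  calc ‖iteratedFDeriv ℝ j (L ∘ k) z‖ ≤ ‖L‖ * ‖iteratedFDeriv ℝ j k z‖ :=
        L.norm_iteratedFDeriv_comp_left hs.contDiffAt (by exact_mod_cast hj)
    _ ≤ ‖L‖ * (C * (1 + ‖z‖)⁻¹) := by gcongr; exact hC z
    _ = ‖L‖ * C * (1 + ‖z‖)⁻¹ := by ring

theorem dominatedConvolution [MeasurableSpace E] {μ : Measure E} {a : E → ℝ} {k : E → G}
    (hk : InverseDecay n k) (ha : Integrable (fun y ↦ a y * (1 + ‖y‖)⁻¹) μ) :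
    DominatedConvolution μ n a k := by
  intro j hj R
  obtain ⟨C, hC⟩ := hk j hj
  have hC₀ : 0 ≤ C := by simpa using (norm_nonneg _).trans (hC 0)
  refine ⟨fun y ↦ C * (1 + R) * ‖a y * (1 + ‖y‖)⁻¹‖, ha.norm.const_mul _, fun x y hx ↦ ?_⟩
  calc ‖a y • iteratedFDeriv ℝ j k (x - y)‖ ≤ ‖a y‖ * (C * (1 + ‖x - y‖)⁻¹) := by
        rw [norm_smul]; gcongr; exact hC _
    _ ≤ ‖a y‖ * (C * ((1 + R) * (1 + ‖y‖)⁻¹)) := by gcongr; exact inv_one_add_norm_sub_le hx y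
    _ = C * (1 + R) * ‖a y * (1 + ‖y‖)⁻¹‖ := by
        rw [norm_mul, Real.norm_of_nonneg (by positivity : 0 ≤ (1 + ‖y‖)⁻¹)]; ring

end InverseDecay

end InverseDecay

section SmoothedNorm

theorem hasFDerivAt_norm {E : Type*} [NormedAddCommGroup E] [InnerProductSpace ℝ E] {z : E}
    (hz : z ≠ 0) : HasFDerivAt (fun z : E ↦ ‖z‖) (‖z‖⁻¹ • innerSL ℝ z) z := by
  have h := (hasStrictFDerivAt_norm_sq z).hasFDerivAt.sqrt (by simpa using hz)
  simp only [sqrt_sq (norm_nonneg _)] at h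
  refine h.congr_fderiv ?_
  rw [← Nat.cast_smul_eq_nsmul ℝ, smul_smul]
  congr 1
  field_simp
  norm_num

variable {E : Type*} [NormedAddCommGroup E] [InnerProductSpace ℝ E] [FiniteDimensional ℝ E]

/-- A smooth function agreeing with the norm outside the unit ball, obtained by cutting off the
singularity at the origin. -/
noncomputable def smoothedNorm (z : E) : ℝ :=
  (1 - (⟨1 / 2, 1, by norm_num, by norm_num⟩ : ContDiffBump (0 : E)) z) * ‖z‖

theorem smoothedNorm_of_one_le_norm {z : E} (hz : 1 ≤ ‖z‖) : smoothedNorm z = ‖z‖ := by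
  rw [smoothedNorm, ContDiffBump.zero_of_le_dist _ (by simpa using hz), sub_zero, one_mul]

theorem contDiff_smoothedNorm {n : ℕ} : ContDiff ℝ n (smoothedNorm (E := E)) := by
  refine contDiff_iff_contDiffAt.2 fun z ↦ ?_
  by_cases hz : z = 0
  · subst hz
    refine (contDiffAt_const (c := (0 : ℝ))).congr_of_eventuallyEq ?_
    filter_upwards [ContDiffBump.eventuallyEq_one _] with y hy
    rw [smoothedNorm, hy, Pi.one_apply, sub_self, zero_mul]
  · exact (contDiffAt_const.sub ((ContDiffBump.contDiff _).contDiffAt.of_le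
      (by exact_mod_cast le_top))).mul (contDiffAt_norm ℝ hz)

theorem smoothedNorm_eventuallyEq {z : E} (hz : 1 < ‖z‖) : smoothedNorm =ᶠ[𝓝 z] (‖·‖) := by
  filter_upwards [(continuous_norm.tendsto z).eventually_const_lt hz] with y hy
    using smoothedNorm_of_one_le_norm hy.le

theorem fderiv_smoothedNorm {z : E} (hz : 1 < ‖z‖) :
    fderiv ℝ smoothedNorm z = ‖z‖⁻¹ • innerSL ℝ z := by
  rw [(smoothedNorm_eventuallyEq hz).fderiv_eq]
  exact (hasFDerivAt_norm (norm_pos_iff.1 (by linarith))).fderiv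

theorem laplacian_laplacian_smoothedNorm {z : ℝ³} (hz : 1 < ‖z‖) :
    Δ (Δ (smoothedNorm : ℝ³ → ℝ)) z = 0 := by
  have h : smoothedNorm =ᶠ[𝓝 z] fun z : ℝ³ ↦ √(‖z‖ ^ 2 + 0) := by
    filter_upwards [smoothedNorm_eventuallyEq hz] with y hy
    rw [hy, add_zero, sqrt_sq (norm_nonneg y)]
  have h' := InnerProductSpace.laplacian_congr_nhds (InnerProductSpace.laplacian_congr_nhds h)
  rw [h'.eq_of_nhds, laplacian_laplacian_sqrt_norm_sq_add 0 (by positivity)]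
  simp

theorem norm_iteratedFDeriv_smoothedNorm_eq {s : ℝ} (hs : 1 ≤ s) (j : ℕ) {z : E} (hz : s < ‖z‖) :
    ‖iteratedFDeriv ℝ j smoothedNorm z‖ =
      s * (s⁻¹ ^ j * ‖iteratedFDeriv ℝ j smoothedNorm (s⁻¹ • z)‖) := by
  have hs₀ : 0 < s := by linarith
  have homogeneous : smoothedNorm =ᶠ[𝓝 z] fun y : E ↦ s • smoothedNorm (s⁻¹ • y) := by
    filter_upwards [(continuous_norm.tendsto z).eventually_const_lt hz] with y hy
    have norm_smul_y : ‖s⁻¹ • y‖ = s⁻¹ * ‖y‖ := by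
      rw [norm_smul, norm_inv, Real.norm_of_nonneg hs₀.le]
    rw [smoothedNorm_of_one_le_norm (by linarith), smoothedNorm_of_one_le_norm, norm_smul_y,
      smul_eq_mul, mul_inv_cancel_left₀ hs₀.ne']
    rw [norm_smul_y, inv_mul_eq_div, one_le_div hs₀]
    exact hy.le
  have hsmooth : ContDiff ℝ j fun y : E ↦ smoothedNorm (s⁻¹ • y) :=
    contDiff_smoothedNorm.comp (contDiff_const_smul _)
  rw [(homogeneous.iteratedFDeriv ℝ j).eq_of_nhds,
    iteratedFDeriv_const_smul_apply' hsmooth.contDiffAt,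
    iteratedFDeriv_comp_const_smul _ contDiff_smoothedNorm]
  simp only [norm_smul, norm_pow, norm_inv, Real.norm_of_nonneg hs₀.le]

theorem exists_norm_iteratedFDeriv_smoothedNorm_le (j : ℕ) :
    ∃ C : ℝ, ∀ z : E, ‖iteratedFDeriv ℝ (j + 2) smoothedNorm z‖ ≤ C * (1 + ‖z‖)⁻¹ := by
  obtain ⟨C, hC⟩ := (isCompact_closedBall (0 : E) 2).exists_bound_of_continuousOn
    (contDiff_smoothedNorm.continuous_iteratedFDeriv (m := j + 2) le_rfl).continuousOn
  simp only [mem_closedBall_zero_iff] at hC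
  have hC₀ : 0 ≤ C := (norm_nonneg _).trans (hC 0 (by simp))
  refine ⟨3 * C, fun z ↦ ?_⟩
  rw [← div_eq_mul_inv, le_div_iff₀ (by positivity)]
  rcases le_or_gt ‖z‖ 2 with hz | hz
  · nlinarith [hC z hz, norm_nonneg (iteratedFDeriv ℝ (j + 2) smoothedNorm z)]
  · obtain ⟨s, hs⟩ : ∃ s, ‖z‖ = 2 * s := ⟨‖z‖ / 2, by ring⟩
    have hs₁ : 1 < s := by linarith
    have hs₀ : 0 < s := by linarith
    have norm_rescaled : ‖s⁻¹ • z‖ ≤ 2 := by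
      rw [norm_smul, norm_inv, Real.norm_of_nonneg hs₀.le, hs]
      field_simp
      exact le_rfl
    have power_le : s⁻¹ ^ (j + 2) ≤ s⁻¹ ^ 2 :=
      pow_le_pow_of_le_one (by positivity) (inv_le_one_of_one_le₀ hs₁.le) (by omega)
    rw [norm_iteratedFDeriv_smoothedNorm_eq hs₁.le (j + 2) (by linarith), hs]
    calc s * (s⁻¹ ^ (j + 2) * ‖iteratedFDeriv ℝ (j + 2) smoothedNorm (s⁻¹ • z)‖) * (1 + 2 * s)
        ≤ s * (s⁻¹ ^ 2 * C) * (3 * s) := by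
          gcongr s * (?_ * ?_) * ?_
          · exact hC _ norm_rescaled
          · linarith
      _ = 3 * C := by field_simp

end SmoothedNorm

section SmoothedNormDecay

variable {E : Type} [NormedAddCommGroup E] [InnerProductSpace ℝ E] [FiniteDimensional ℝ E]

theorem inverseDecay_fderiv_fderiv_smoothedNorm (n : ℕ) :
    InverseDecay n (fderiv ℝ (fderiv ℝ (smoothedNorm (E := E)))) := by
  intro j _
  obtain ⟨C, hC⟩ := exists_norm_iteratedFDeriv_smoothedNorm_le (E := E) j
  refine ⟨C, fun z ↦ ?_⟩
  rw [norm_iteratedFDeriv_fderiv, norm_iteratedFDeriv_fderiv]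
  exact hC z

end SmoothedNormDecay

section RenormalizedConvolution

section Kernel

variable {E : Type*} [NormedAddCommGroup E] [NormedSpace ℝ E] {h k : E → ℝ}

theorem hasFDerivAt_smul_fderiv_sub (hk : ContDiff ℝ 2 k) (x y : E) :
    HasFDerivAt (fun x ↦ h y • (fderiv ℝ k (x - y) - fderiv ℝ k (-y)))
      (h y • fderiv ℝ (fderiv ℝ k) (x - y)) x := by
  have hk' : ContDiff ℝ 1 (fderiv ℝ k) := hk.fderiv_right le_rfl
  simp only [smul_sub]
  exact (hasFDerivAt_smul_comp_sub (hk'.differentiable one_ne_zero) (h y) x y).sub_const _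

theorem hasFDerivAt_renormalized_kernel (hk : Differentiable ℝ k) (x y : E) :
    HasFDerivAt (fun x ↦ h y * (k (x - y) - k (-y) - fderiv ℝ k (-y) x))
      (h y • (fderiv ℝ k (x - y) - fderiv ℝ k (-y))) x :=
  ((((hk _).hasFDerivAt.comp x ((hasFDerivAt_id x).sub_const y)).sub_const _).sub
    (fderiv ℝ k (-y)).hasFDerivAt).const_mul (h y)

end Kernel

variable {E : Type} [NormedAddCommGroup E] [NormedSpace ℝ E] [MeasurableSpace E]
  {μ : Measure E} {n : ℕ} {h k : E → ℝ}

/-- The convolution of a weight `h` with a kernel `k` whose second derivative decays. Subtracting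
the first order Taylor polynomial at `x = 0` makes the integral converge and leaves the second
derivative unchanged. -/
noncomputable def renormalizedConvolution (μ : Measure E) (h k : E → ℝ) (x : E) : ℝ :=
  ∫ y, h y * (k (x - y) - k (-y) - fderiv ℝ k (-y) x) ∂μ

theorem locallyDominated_smul_fderiv_sub (hk : ContDiff ℝ 2 k)
    (hd : DominatedConvolution μ n h (fderiv ℝ (fderiv ℝ k))) :
    LocallyDominated μ fun x y ↦ h y • (fderiv ℝ k (x - y) - fderiv ℝ k (-y)) :=
  hd.locallyDominated.of_hasFDerivAt (hasFDerivAt_smul_fderiv_sub hk) (by simp)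

variable [BorelSpace E]

theorem aestronglyMeasurable_renormalized_kernel (hh : AEStronglyMeasurable h μ)
    (hk : ContDiff ℝ 1 k) (x : E) :
    AEStronglyMeasurable (fun y ↦ h y * (k (x - y) - k (-y) - fderiv ℝ k (-y) x)) μ := by
  have hk₀ : Continuous k := hk.continuous
  have := hk.continuous_fderiv one_ne_zero
  exact hh.mul (Continuous.aestronglyMeasurable (by fun_prop))

variable [SecondCountableTopology E]

theorem aestronglyMeasurable_smul_fderiv_sub (hh : AEStronglyMeasurable h μ)
    (hk : ContDiff ℝ 1 k) (x : E) :
    AEStronglyMeasurable (fun y ↦ h y • (fderiv ℝ k (x - y) - fderiv ℝ k (-y))) μ := by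
  have := hk.continuous_fderiv one_ne_zero
  exact hh.smul (Continuous.aestronglyMeasurable (by fun_prop))

theorem hasFDerivAt_renormalizedConvolution (hh : AEStronglyMeasurable h μ) (hk : ContDiff ℝ 2 k)
    (hd : DominatedConvolution μ n h (fderiv ℝ (fderiv ℝ k))) (x : E) :
    HasFDerivAt (renormalizedConvolution μ h k)
      (∫ y, h y • (fderiv ℝ k (x - y) - fderiv ℝ k (-y)) ∂μ) x :=
  (locallyDominated_smul_fderiv_sub hk hd).hasFDerivAt_integral
    (aestronglyMeasurable_renormalized_kernel hh (hk.of_le one_le_two))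
    (aestronglyMeasurable_smul_fderiv_sub hh (hk.of_le one_le_two))
    (hasFDerivAt_renormalized_kernel (hk.differentiable two_ne_zero)) (by simp) x

theorem hasFDerivAt_fderiv_renormalizedConvolution (hh : AEStronglyMeasurable h μ)
    (hk : ContDiff ℝ 2 k) (hd : DominatedConvolution μ n h (fderiv ℝ (fderiv ℝ k))) (x : E) :
    HasFDerivAt (fderiv ℝ (renormalizedConvolution μ h k))
      (∫ y, h y • fderiv ℝ (fderiv ℝ k) (x - y) ∂μ) x := by
  have hk' : ContDiff ℝ 1 (fderiv ℝ k) := hk.fderiv_right le_rfl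
  rw [funext fun x ↦ (hasFDerivAt_renormalizedConvolution hh hk hd x).fderiv]
  exact hd.locallyDominated.hasFDerivAt_integral
    (aestronglyMeasurable_smul_fderiv_sub hh (hk.of_le one_le_two))
    (aestronglyMeasurable_smul_comp_const_sub hh (hk'.continuous_fderiv one_ne_zero))
    (hasFDerivAt_smul_fderiv_sub hk) (by simp) x

theorem contDiff_renormalizedConvolution (hh : AEStronglyMeasurable h μ)
    (hk : ContDiff ℝ (n + 2) k) (hd : DominatedConvolution μ n h (fderiv ℝ (fderiv ℝ k))) :
    ContDiff ℝ (n + 2) (renormalizedConvolution μ h k) := by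
  have hk₂ : ContDiff ℝ 2 k := hk.of_le le_add_self
  rw [← one_add_one_eq_two, ← add_assoc] at hk ⊢
  have hk' : ContDiff ℝ n (fderiv ℝ (fderiv ℝ k)) := (hk.fderiv_right le_rfl).fderiv_right le_rfl
  exact contDiff_succ_iff_hasFDerivAt.2 ⟨_, contDiff_succ_iff_hasFDerivAt.2
    ⟨_, contDiff_convolution hh hk' hd, hasFDerivAt_fderiv_renormalizedConvolution hh hk₂ hd⟩,
    fun x ↦ (hasFDerivAt_renormalizedConvolution hh hk₂ hd x).differentiableAt.hasFDerivAt⟩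

end RenormalizedConvolution

section LaplacianRenormalizedConvolution

variable {E : Type} [NormedAddCommGroup E] [InnerProductSpace ℝ E] [FiniteDimensional ℝ E]
  [MeasurableSpace E] [BorelSpace E] {μ : Measure E} {n : ℕ} {h k : E → ℝ}

theorem laplacian_renormalizedConvolution (hh : AEStronglyMeasurable h μ) (hk : ContDiff ℝ 2 k)
    (hd : DominatedConvolution μ n h (fderiv ℝ (fderiv ℝ k))) :
    Δ (renormalizedConvolution μ h k) = fun x ↦ ∫ y, h y * Δ k (x - y) ∂μ := by
  have hk' : ContDiff ℝ 1 (fderiv ℝ k) := hk.fderiv_right le_rfl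
  ext x
  simp only [laplacian_eq_traceForm]
  rw [(hasFDerivAt_fderiv_renormalizedConvolution hh hk hd x).fderiv,
    ← traceForm.integral_comp_comm (integrable_convolution hh
      (hk'.continuous_fderiv one_ne_zero) hd x)]
  simp only [map_smul, smul_eq_mul]

end LaplacianRenormalizedConvolution

section RenormalizedNorm

variable {E : Type*} [NormedAddCommGroup E] [InnerProductSpace ℝ E]

/-- The kernel `‖x - y‖` minus its first order Taylor polynomial in `x` at the origin. At `y = 0`,
where there is no such polynomial, the convention `0⁻¹ = 0` gives the value `‖x‖`. -/
noncomputable def renormalizedNorm (x y : E) : ℝ := ‖x - y‖ - ‖y‖ + ‖y‖⁻¹ * ⟪y, x⟫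

theorem renormalizedNorm_eq (x : E) {y : E} (hy : y ≠ 0) :
    renormalizedNorm x y = (‖x‖ ^ 2 - (‖x - y‖ - ‖y‖) ^ 2) * (2 * ‖y‖)⁻¹ := by
  have norm_sub_sq := norm_sub_sq_real x y
  have hy' : ‖y‖ ≠ 0 := norm_ne_zero_iff.2 hy
  rw [renormalizedNorm, real_inner_comm]
  field_simp
  linarith

theorem renormalizedNorm_nonneg (x y : E) : 0 ≤ renormalizedNorm x y := by
  rcases eq_or_ne y 0 with rfl | hy
  · simp [renormalizedNorm]
  · rw [renormalizedNorm_eq x hy]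
    have reverse_triangle : |‖x - y‖ - ‖y‖| ≤ ‖x‖ := by
      simpa using abs_norm_sub_norm_le (x - y) (-y)
    exact mul_nonneg (sub_nonneg.2 (sq_le_sq.2 (by simpa using reverse_triangle))) (by positivity)

theorem renormalizedNorm_le_norm_sq (x : E) {y : E} (hy : y ≠ 0) :
    renormalizedNorm x y ≤ ‖x‖ ^ 2 / 2 * ‖y‖⁻¹ := by
  calc renormalizedNorm x y = (‖x‖ ^ 2 - (‖x - y‖ - ‖y‖) ^ 2) * (2 * ‖y‖)⁻¹ :=
        renormalizedNorm_eq x hy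
    _ ≤ ‖x‖ ^ 2 * (2 * ‖y‖)⁻¹ := by gcongr; linarith [sq_nonneg (‖x - y‖ - ‖y‖)]
    _ = ‖x‖ ^ 2 / 2 * ‖y‖⁻¹ := by ring

theorem renormalizedNorm_le (x y : E) : renormalizedNorm x y ≤ 2 * ‖x‖ := by
  have hinner : ‖y‖⁻¹ * ⟪y, x⟫ ≤ ‖x‖ :=
    calc ‖y‖⁻¹ * ⟪y, x⟫ ≤ ‖y‖⁻¹ * (‖y‖ * ‖x‖) := by gcongr; exact real_inner_le_norm y x
      _ = ‖y‖⁻¹ * ‖y‖ * ‖x‖ := by ring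
      _ ≤ 1 * ‖x‖ := by gcongr; exact inv_mul_le_one
      _ = ‖x‖ := one_mul _
  rw [renormalizedNorm]
  linarith [norm_sub_le x y]

theorem renormalizedNorm_div_norm_sq_le (x y : E) : renormalizedNorm x y / ‖x‖ ^ 2 ≤ 2 * ‖x‖⁻¹ := by
  rcases eq_or_ne x 0 with rfl | hx
  · simp
  · have : 0 < ‖x‖ := norm_pos_iff.2 hx
    rw [div_le_iff₀ (by positivity)]
    calc renormalizedNorm x y ≤ 2 * ‖x‖ := renormalizedNorm_le x y
      _ = 2 * ‖x‖⁻¹ * ‖x‖ ^ 2 := by field_simp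

theorem renormalizedNorm_div_norm_sq_le_inv (x : E) {y : E} (hy : y ≠ 0) :
    renormalizedNorm x y / ‖x‖ ^ 2 ≤ ‖y‖⁻¹ := by
  refine div_le_of_le_mul₀ (by positivity) (by positivity)
    ((renormalizedNorm_le_norm_sq x hy).trans ?_)
  nlinarith [mul_nonneg (sq_nonneg ‖x‖) (inv_nonneg.2 (norm_nonneg y))]

end RenormalizedNorm

section Potential

variable {E : Type*} [NormedAddCommGroup E] [InnerProductSpace ℝ E] [MeasurableSpace E]
  {μ : Measure E} {f g b : E → ℝ}

/-- The potential of the density `f` for the renormalised norm kernel. In dimension three the norm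
is a multiple of the fundamental solution of the bilaplacian. -/
noncomputable def normPotential (μ : Measure E) (f : E → ℝ) (x : E) : ℝ :=
  ∫ y, f y * renormalizedNorm x y ∂μ

theorem normPotential_nonneg (hf : ∀ y, 0 ≤ f y) (x : E) : 0 ≤ normPotential μ f x :=
  integral_nonneg fun y ↦ mul_nonneg (hf y) (renormalizedNorm_nonneg x y)

variable [BorelSpace E]

theorem aestronglyMeasurable_renormalizedNorm (x : E) :
    AEStronglyMeasurable (renormalizedNorm x) μ :=
  have continuous_part : Continuous fun y : E ↦ ‖x - y‖ - ‖y‖ := by fun_prop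
  have continuous_inner : Continuous fun y : E ↦ ⟪y, x⟫ := by fun_prop
  continuous_part.aestronglyMeasurable.add
    (measurable_norm.inv.aestronglyMeasurable.mul continuous_inner.aestronglyMeasurable)

variable [NullSingletonClass μ]

theorem integrable_mul_renormalizedNorm (hf : AEStronglyMeasurable f μ)
    (hi : Integrable (fun y ↦ f y * ‖y‖⁻¹) μ) (x : E) :
    Integrable (fun y ↦ f y * renormalizedNorm x y) μ := by
  refine (hi.norm.const_mul (‖x‖ ^ 2 / 2)).mono'
    (hf.mul (aestronglyMeasurable_renormalizedNorm x)) ?_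
  filter_upwards [compl_mem_ae_iff.2 (measure_singleton (0 : E))] with y hy
  calc ‖f y * renormalizedNorm x y‖ = ‖f y‖ * renormalizedNorm x y := by
        rw [norm_mul, Real.norm_of_nonneg (renormalizedNorm_nonneg x y)]
    _ ≤ ‖f y‖ * (‖x‖ ^ 2 / 2 * ‖y‖⁻¹) := by gcongr; exact renormalizedNorm_le_norm_sq x hy
    _ = ‖x‖ ^ 2 / 2 * ‖f y * ‖y‖⁻¹‖ := by rw [norm_mul, norm_inv, norm_norm]; ring

theorem abs_normPotential_sub_le (hf : AEStronglyMeasurable f μ) (hg : AEStronglyMeasurable g μ)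
    (hfi : Integrable (fun y ↦ f y * ‖y‖⁻¹) μ) (hgi : Integrable (fun y ↦ g y * ‖y‖⁻¹) μ)
    (hb : ∀ y, |f y - g y| ≤ b y) (hbi : Integrable (fun y ↦ b y * ‖y‖⁻¹) μ) (x : E) :
    |normPotential μ f x - normPotential μ g x| ≤ ‖x‖ ^ 2 / 2 * ∫ y, b y * ‖y‖⁻¹ ∂μ := by
  rw [normPotential, normPotential, ← integral_sub (integrable_mul_renormalizedNorm hf hfi x)
    (integrable_mul_renormalizedNorm hg hgi x), ← integral_const_mul, ← Real.norm_eq_abs]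
  refine norm_integral_le_of_norm_le (hbi.const_mul _) ?_
  filter_upwards [compl_mem_ae_iff.2 (measure_singleton (0 : E))] with y hy
  have hb₀ : 0 ≤ b y := (abs_nonneg _).trans (hb y)
  calc ‖f y * renormalizedNorm x y - g y * renormalizedNorm x y‖
      = |f y - g y| * renormalizedNorm x y := by
        rw [← sub_mul, norm_mul, Real.norm_of_nonneg (renormalizedNorm_nonneg x y),
          Real.norm_eq_abs]
    _ ≤ b y * (‖x‖ ^ 2 / 2 * ‖y‖⁻¹) :=
        mul_le_mul (hb y) (renormalizedNorm_le_norm_sq x hy) (renormalizedNorm_nonneg x y) hb₀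
    _ = ‖x‖ ^ 2 / 2 * (b y * ‖y‖⁻¹) := by ring

theorem normPotential_le (hf : AEStronglyMeasurable f μ) (hf₀ : ∀ y, 0 ≤ f y)
    (hi : Integrable (fun y ↦ f y * ‖y‖⁻¹) μ) (x : E) :
    normPotential μ f x ≤ ‖x‖ ^ 2 / 2 * ∫ y, f y * ‖y‖⁻¹ ∂μ := by
  have potential_zero : normPotential μ (fun _ ↦ 0) x = 0 := by simp [normPotential]
  have bound := abs_normPotential_sub_le (g := fun _ ↦ 0) hf aestronglyMeasurable_const hi (by simp)
    (fun y ↦ by rw [sub_zero, abs_of_nonneg (hf₀ y)]) hi x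
  rw [potential_zero, sub_zero] at bound
  exact (le_abs_self _).trans bound

theorem tendsto_normPotential_div_norm_sq [ProperSpace E] (hf : AEStronglyMeasurable f μ)
    (hi : Integrable (fun y ↦ f y * ‖y‖⁻¹) μ) :
    Tendsto (fun x ↦ normPotential μ f x / ‖x‖ ^ 2) (cocompact E) (𝓝 0) := by
  have : (cocompact E).IsCountablyGenerated := by
    rw [← Metric.cobounded_eq_cocompact, ← comap_norm_atTop]
    infer_instance
  have hquot (x y : E) : ‖f y * (renormalizedNorm x y / ‖x‖ ^ 2)‖ =
      ‖f y‖ * (renormalizedNorm x y / ‖x‖ ^ 2) := by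
    rw [norm_mul, Real.norm_of_nonneg (div_nonneg (renormalizedNorm_nonneg x y) (by positivity))]
  have pointwise (y : E) :
      Tendsto (fun x ↦ f y * (renormalizedNorm x y / ‖x‖ ^ 2)) (cocompact E) (𝓝 0) := by
    have hinv : Tendsto (fun x : E ↦ ‖f y‖ * (2 * ‖x‖⁻¹)) (cocompact E) (𝓝 0) := by
      simpa using ((tendsto_norm_cocompact_atTop (E := E)).inv_tendsto_atTop.const_mul 2).const_mul
        ‖f y‖
    refine squeeze_zero_norm (fun x ↦ ?_) hinv
    rw [hquot]
    gcongr
    exact renormalizedNorm_div_norm_sq_le x y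
  simp only [normPotential, ← integral_div, mul_div_assoc]
  rw [← integral_zero E ℝ (μ := μ)]
  refine tendsto_integral_filter_of_dominated_convergence (fun y ↦ ‖f y * ‖y‖⁻¹‖)
    (Eventually.of_forall fun x ↦
      hf.mul ((aestronglyMeasurable_renormalizedNorm x).mul_const _)) ?_ hi.norm
    (Eventually.of_forall pointwise)
  refine Eventually.of_forall fun x ↦ ?_
  filter_upwards [compl_mem_ae_iff.2 (measure_singleton (0 : E))] with y hy
  rw [hquot, norm_mul, norm_inv, norm_norm]
  gcongr
  exact renormalizedNorm_div_norm_sq_le_inv x hy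

end Potential

section PotentialRegularity

theorem laplacian_const_add_clm {E : Type*} [NormedAddCommGroup E] [InnerProductSpace ℝ E]
    [FiniteDimensional ℝ E] (c : ℝ) (L : E →L[ℝ] ℝ) : Δ (fun x ↦ c + L x) = 0 := by
  have gradient : fderiv ℝ (fun x ↦ c + L x) = fun _ ↦ L :=
    funext fun x ↦ (L.hasFDerivAt.const_add c).fderiv
  ext x
  simp [laplacian_eq_traceForm, gradient]

theorem laplacian_laplacian_add {E : Type*} [NormedAddCommGroup E] [InnerProductSpace ℝ E]
    [FiniteDimensional ℝ E] {u v : E → ℝ} (hu : ContDiff ℝ 4 u) (hv : ContDiff ℝ 4 v) :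
    Δ (Δ fun x ↦ u x + v x) = Δ (Δ u) + Δ (Δ v) := by
  have hu₂ : ContDiff ℝ 2 u := hu.of_le (by norm_num)
  have hv₂ : ContDiff ℝ 2 v := hv.of_le (by norm_num)
  have hsum : Δ (fun x ↦ u x + v x) = Δ u + Δ v :=
    funext fun x ↦ hu₂.contDiffAt.laplacian_add hv₂.contDiffAt
  rw [hsum]
  exact funext fun x ↦ (contDiff_laplacian (hu.of_le (by norm_num))).contDiffAt.laplacian_add
    (contDiff_laplacian (hv.of_le (by norm_num))).contDiffAt

theorem laplacian_laplacian_integral_mul_norm_sub {g : ℝ³ → ℝ} (hg : ContDiff ℝ 4 g)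
    (hc : HasCompactSupport g) (x : ℝ³) :
    Δ (Δ fun x : ℝ³ ↦ ∫ y, g y * ‖x - y‖) x = -(biharmonicConst * g x) := by
  have swap : (fun x : ℝ³ ↦ ∫ y, g y * ‖x - y‖) = fun x ↦ ∫ y, ‖y‖ * g (x - y) := by
    ext x
    rw [← integral_sub_left_eq_self _ volume x]
    simp [mul_comm]
  have norm_locallyIntegrable : LocallyIntegrable (fun y : ℝ³ ↦ ‖y‖) :=
    continuous_norm.locallyIntegrable
  have hΔg : ContDiff ℝ 2 (Δ g) := contDiff_laplacian (hg.of_le (by norm_num))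
  rw [swap, laplacian_convolution continuous_norm.aestronglyMeasurable (hg.of_le (by norm_num))
      (dominatedConvolution_of_hasCompactSupport norm_locallyIntegrable
        (hg.of_le (by norm_num)) hc),
    laplacian_convolution continuous_norm.aestronglyMeasurable hΔg
      (dominatedConvolution_of_hasCompactSupport norm_locallyIntegrable hΔg
        (hasCompactSupport_laplacian hc))]
  have parametrix := integral_norm_mul_bilaplacian (v := fun z ↦ g (x - z))
    (hg.comp (contDiff_const.sub contDiff_id)) (hc.comp_homeomorph (Homeomorph.subLeft x))
  simpa only [laplacian_comp_const_sub, sub_zero] using parametrix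

section Decay

variable {E : Type} [NormedAddCommGroup E] [InnerProductSpace ℝ E] [FiniteDimensional ℝ E]

theorem contDiff_fderiv_fderiv_smoothedNorm (n : ℕ) :
    ContDiff ℝ n (fderiv ℝ (fderiv ℝ (smoothedNorm (E := E)))) := by
  have smooth : ContDiff ℝ (n + 1 + 1) (smoothedNorm (E := E)) :=
    contDiff_smoothedNorm (n := n + 1 + 1)
  exact (smooth.fderiv_right le_rfl).fderiv_right le_rfl

theorem inverseDecay_laplacian_smoothedNorm (n : ℕ) :
    InverseDecay n (Δ (smoothedNorm : E → ℝ)) := by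
  have decay := (inverseDecay_fderiv_fderiv_smoothedNorm n).clm_comp (traceForm (E := E))
    (contDiff_fderiv_fderiv_smoothedNorm n)
  rwa [laplacian_eq_traceForm]

end Decay

theorem laplacian_laplacian_renormalizedConvolution_smoothedNorm {μ : Measure ℝ³} {h : ℝ³ → ℝ}
    (hh : AEStronglyMeasurable h μ) (hi : Integrable (fun y ↦ h y * (1 + ‖y‖)⁻¹) μ) {x : ℝ³}
    (hx : ∀ y, ‖x - y‖ ≤ 1 → h y = 0) :
    Δ (Δ (renormalizedConvolution μ h smoothedNorm)) x = 0 := by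
  rw [laplacian_renormalizedConvolution hh contDiff_smoothedNorm
      ((inverseDecay_fderiv_fderiv_smoothedNorm 0).dominatedConvolution hi),
    laplacian_convolution hh (contDiff_laplacian (contDiff_smoothedNorm (n := 4)))
      ((inverseDecay_laplacian_smoothedNorm 2).dominatedConvolution hi)]
  refine integral_eq_zero_of_ae (Eventually.of_forall fun y ↦ ?_)
  rcases le_or_gt ‖x - y‖ 1 with hy | hy
  · simp [hx y hy]
  · simp [laplacian_laplacian_smoothedNorm hy]

theorem integrable_mul_inv_one_add_norm {E : Type*} [NormedAddCommGroup E] [MeasurableSpace E]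
    [BorelSpace E] {μ : Measure E} {f h : E → ℝ} (hh : AEStronglyMeasurable h μ)
    (hi : Integrable (fun y ↦ f y * ‖y‖⁻¹) μ) (hh₀ : h 0 = 0) (hhf : ∀ y, |h y| ≤ |f y|) :
    Integrable (fun y ↦ h y * (1 + ‖y‖)⁻¹) μ := by
  have weight : Continuous fun y : E ↦ (1 + ‖y‖)⁻¹ :=
    (continuous_const.add continuous_norm).inv₀ fun y ↦
      (add_pos_of_pos_of_nonneg one_pos (norm_nonneg y)).ne'
  refine hi.mono (hh.mul weight.aestronglyMeasurable) (Eventually.of_forall fun y ↦ ?_)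
  rcases eq_or_ne y 0 with rfl | hy
  · simp [hh₀]
  · have : 0 < ‖y‖ := norm_pos_iff.2 hy
    rw [norm_mul, norm_mul, norm_of_nonneg (by positivity : 0 ≤ (1 + ‖y‖)⁻¹), norm_inv, norm_norm]
    gcongr
    · exact hhf y
    · linarith

section Splitting

variable {E : Type} [NormedAddCommGroup E] [InnerProductSpace ℝ E] {f g h : E → ℝ}

theorem renormalizedNorm_eq_smoothedNorm [FiniteDimensional ℝ E] {x y : E} (hy : ‖x‖ + 1 < ‖y‖) :
    renormalizedNorm x y =
      smoothedNorm (x - y) - smoothedNorm (-y) - fderiv ℝ smoothedNorm (-y) x := by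
  have hy₁ : 1 < ‖-y‖ := by rw [norm_neg]; linarith [norm_nonneg x]
  have hxy : 1 ≤ ‖x - y‖ := by linarith [norm_sub_norm_le y x, norm_sub_rev x y]
  rw [smoothedNorm_of_one_le_norm hxy, smoothedNorm_of_one_le_norm hy₁.le, fderiv_smoothedNorm hy₁,
    renormalizedNorm]
  simp

theorem exists_cutoff_decomposition {n : ℕ} [FiniteDimensional ℝ E] (hf : ContDiff ℝ n f) (R : ℝ) :
    ∃ g h : E → ℝ, f = g + h ∧ ContDiff ℝ n g ∧ HasCompactSupport g ∧
      (∀ y, ‖y‖ ≤ R → h y = 0) ∧ ∀ y, |h y| ≤ |f y| := by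
  let χ : ContDiffBump (0 : E) := ⟨|R| + 1, |R| + 2, by positivity, by linarith⟩
  refine ⟨fun y ↦ χ y * f y, fun y ↦ (1 - χ y) * f y, ?_, χ.contDiff.mul hf,
    χ.hasCompactSupport.mul_right, fun y hy ↦ ?_, fun y ↦ ?_⟩
  · ext y
    simp only [Pi.add_apply]
    ring
  · have hy' : y ∈ Metric.closedBall 0 χ.rIn := by
      rw [mem_closedBall_zero_iff]
      linarith [le_abs_self R]
    simp [χ.one_of_mem_closedBall hy']
  · rw [abs_mul, abs_of_nonneg (sub_nonneg.2 χ.le_one)]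
    exact mul_le_of_le_one_left (abs_nonneg _) (by linarith [χ.nonneg (x := y)])

variable [MeasurableSpace E] {μ : Measure E}

theorem normPotential_eq_renormalizedConvolution [FiniteDimensional ℝ E] {x : E}
    (hh : ∀ y, ‖y‖ ≤ ‖x‖ + 1 → h y = 0) :
    normPotential μ h x = renormalizedConvolution μ h smoothedNorm x := by
  refine integral_congr_ae (Eventually.of_forall fun y ↦ ?_)
  rcases le_or_gt ‖y‖ (‖x‖ + 1) with hy | hy
  · simp [hh y hy]
  · simp only [renormalizedNorm_eq_smoothedNorm hy]

theorem normPotential_add [BorelSpace E] [NullSingletonClass μ] (hg : AEStronglyMeasurable g μ)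
    (hh : AEStronglyMeasurable h μ) (hgi : Integrable (fun y ↦ g y * ‖y‖⁻¹) μ)
    (hhi : Integrable (fun y ↦ h y * ‖y‖⁻¹) μ) (x : E) :
    normPotential μ (g + h) x = normPotential μ g x + normPotential μ h x := by
  simp only [normPotential, Pi.add_apply, add_mul]
  exact integral_add (integrable_mul_renormalizedNorm hg hgi x)
    (integrable_mul_renormalizedNorm hh hhi x)

theorem exists_normPotential_eq_of_hasCompactSupport [BorelSpace E] [FiniteDimensional ℝ E]
    [IsFiniteMeasureOnCompacts μ] (hg : Continuous g) (hc : HasCompactSupport g) :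
    ∃ (c : ℝ) (L : E →L[ℝ] ℝ), ∀ x,
      normPotential μ g x = (∫ y, g y * ‖x - y‖ ∂μ) + (c + L x) := by
  have hmoment : Integrable (fun y ↦ (g y * ‖y‖⁻¹) • y) μ := by
    refine (hg.integrable_of_hasCompactSupport hc).mono ?_ (Eventually.of_forall fun y ↦ ?_)
    · exact (hg.aestronglyMeasurable.mul measurable_norm.inv.aestronglyMeasurable).smul
        continuous_id.aestronglyMeasurable
    · rw [norm_smul, norm_mul, norm_inv, norm_norm, mul_assoc]
      exact mul_le_of_le_one_right (norm_nonneg _) inv_mul_le_one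
  have hnorm (x : E) : Integrable (fun y ↦ g y * ‖x - y‖) μ :=
    Continuous.integrable_of_hasCompactSupport (by fun_prop) hc.mul_right
  have hnorm₀ : Integrable (fun y ↦ g y * ‖y‖) μ := by simpa using hnorm 0
  refine ⟨-∫ y, g y * ‖y‖ ∂μ, innerSL ℝ (∫ y, (g y * ‖y‖⁻¹) • y ∂μ), fun x ↦ ?_⟩
  have moment_apply : innerSL ℝ (∫ y, (g y * ‖y‖⁻¹) • y ∂μ) x =
      ∫ y, ⟪x, (g y * ‖y‖⁻¹) • y⟫ ∂μ := by
    rw [integral_inner hmoment, innerSL_apply_apply, real_inner_comm]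
  have integrand (y : E) : g y * renormalizedNorm x y =
      g y * ‖x - y‖ - g y * ‖y‖ + ⟪x, (g y * ‖y‖⁻¹) • y⟫ := by
    rw [renormalizedNorm, inner_smul_right, real_inner_comm x y]
    ring
  simp only [normPotential, integrand]
  rw [integral_add ((hnorm x).sub' hnorm₀) (hmoment.const_inner x), integral_sub (hnorm x) hnorm₀,
    moment_apply]
  ring

variable [BorelSpace E] [FiniteDimensional ℝ E] [IsFiniteMeasureOnCompacts μ] [NullSingletonClass μ]

theorem exists_normPotential_eventuallyEq {n : ℕ} (hf : ContDiff ℝ n f)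
    (hi : Integrable (fun y ↦ f y * ‖y‖⁻¹) μ) (x : E) :
    ∃ (g h : E → ℝ) (c : ℝ) (L : E →L[ℝ] ℝ), ContDiff ℝ n g ∧ HasCompactSupport g ∧ g x = f x ∧
      Continuous h ∧ Integrable (fun y ↦ h y * (1 + ‖y‖)⁻¹) μ ∧ (∀ y, ‖x - y‖ ≤ 1 → h y = 0) ∧
      normPotential μ f =ᶠ[𝓝 x] fun z ↦ ((∫ y, g y * ‖z - y‖ ∂μ) + (c + L z)) +
        renormalizedConvolution μ h smoothedNorm z := by
  obtain ⟨g, h, rfl, hg, hc, hh₀, hhf⟩ := exists_cutoff_decomposition hf (‖x‖ + 2)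
  have hh : Continuous h := by simpa using hf.continuous.sub hg.continuous
  have hhi : Integrable (fun y ↦ h y * ‖y‖⁻¹) μ :=
    hi.mono (hh.aestronglyMeasurable.mul measurable_norm.inv.aestronglyMeasurable)
      (Eventually.of_forall fun y ↦ by
        rw [norm_mul, norm_mul]
        exact mul_le_mul_of_nonneg_right (hhf y) (norm_nonneg _))
  have hgi : Integrable (fun y ↦ g y * ‖y‖⁻¹) μ := by
    simpa only [Pi.add_apply, ← sub_mul, add_sub_cancel_right] using hi.sub' hhi
  obtain ⟨c, L, near⟩ := exists_normPotential_eq_of_hasCompactSupport (μ := μ) hg.continuous hc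
  refine ⟨g, h, c, L, hg, hc, by simp [hh₀ x (by linarith)], hh,
    integrable_mul_inv_one_add_norm hh.aestronglyMeasurable hi
      (hh₀ 0 (by rw [norm_zero]; positivity)) hhf, fun y hy ↦ hh₀ y ?_, ?_⟩
  · linarith [norm_le_norm_add_norm_sub' y x, norm_sub_rev x y]
  · filter_upwards [(continuous_norm.tendsto x).eventually_lt_const
      (lt_add_one ‖x‖)] with z hz
    rw [normPotential_add hg.continuous.aestronglyMeasurable hh.aestronglyMeasurable hgi hhi,
      near, normPotential_eq_renormalizedConvolution fun y hy ↦ hh₀ y (by linarith)]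

end Splitting

theorem contDiff_normPotential {E : Type} [NormedAddCommGroup E] [InnerProductSpace ℝ E]
    [FiniteDimensional ℝ E] [Nontrivial E] [MeasurableSpace E] [BorelSpace E] {μ : Measure E}
    [μ.IsAddHaarMeasure] {f : E → ℝ} {n : ℕ} (hf : ContDiff ℝ n f)
    (hi : Integrable (fun y ↦ f y * ‖y‖⁻¹) μ) : ContDiff ℝ (n + 1) (normPotential μ f) := by
  refine contDiff_iff_contDiffAt.2 fun x ↦ ?_
  obtain ⟨g, h, c, L, hg, hc, -, hh, hhi, -, heq⟩ := exists_normPotential_eventuallyEq hf hi x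
  have near : ContDiff ℝ (n + 1) fun x ↦ ∫ y, g y * ‖x - y‖ ∂μ :=
    contDiff_integral_mul_of_lipschitzWith lipschitzWith_one_norm hg hc
  have far : ContDiff ℝ (n + 2) (renormalizedConvolution μ h smoothedNorm) :=
    contDiff_renormalizedConvolution hh.aestronglyMeasurable
      (contDiff_smoothedNorm (n := n + 2))
      ((inverseDecay_fderiv_fderiv_smoothedNorm n).dominatedConvolution hhi)
  have far' : ContDiff ℝ (n + 1) (renormalizedConvolution μ h smoothedNorm) :=
    far.of_le (by gcongr; exact one_le_two)
  exact (((near.add (contDiff_const.add L.contDiff)).add far').contDiffAt).congr_of_eventuallyEq heq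

theorem laplacian_laplacian_normPotential {f : ℝ³ → ℝ} (hf : ContDiff ℝ 4 f)
    (hi : Integrable fun y ↦ f y * ‖y‖⁻¹) (x : ℝ³) :
    Δ (Δ (normPotential volume f)) x = -(biharmonicConst * f x) := by
  obtain ⟨g, h, c, L, hg, hc, hgx, hh, hhi, hh₀, heq⟩ :=
    exists_normPotential_eventuallyEq (n := 4) hf hi x
  have near : ContDiff ℝ 4 fun x ↦ ∫ y, g y * ‖x - y‖ :=
    (contDiff_integral_mul_of_lipschitzWith lipschitzWith_one_norm hg hc).of_le le_self_add
  have affine : ContDiff ℝ 4 fun x ↦ c + L x := contDiff_const.add L.contDiff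
  have far : ContDiff ℝ 4 (renormalizedConvolution volume h smoothedNorm) :=
    contDiff_renormalizedConvolution (n := 2) hh.aestronglyMeasurable contDiff_smoothedNorm
      ((inverseDecay_fderiv_fderiv_smoothedNorm 2).dominatedConvolution hhi)
  rw [(InnerProductSpace.laplacian_congr_nhds
      (InnerProductSpace.laplacian_congr_nhds heq)).eq_of_nhds,
    laplacian_laplacian_add (near.add affine) far, laplacian_laplacian_add near affine,
    laplacian_const_add_clm]
  simp only [Pi.add_apply, laplacian_laplacian_integral_mul_norm_sub hg hc x, hgx,
    laplacian_laplacian_renormalizedConvolution_smoothedNorm hh.aestronglyMeasurable hhi hh₀]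
  simp [Pi.zero_def]

end PotentialRegularity

section FixedPoint

open scoped NNReal BoundedContinuousFunction

theorem exists_continuous_eq_add {X : Type*} [TopologicalSpace X] {ω P : X → ℝ}
    (hω : Continuous ω) (hω₀ : ∀ x, 0 < ω x) (hP : Continuous P) {T : (X → ℝ) → X → ℝ} {K : ℝ≥0}
    (hK : K < 1) (hTc : ∀ u, Continuous u → P ≤ u → Continuous (T u))
    (hT₀ : ∀ u, Continuous u → P ≤ u → 0 ≤ T u)
    (hTb : ∀ u, Continuous u → P ≤ u → ∃ C, ∀ x, T u x ≤ C * ω x)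
    (hTl : ∀ u v, Continuous u → Continuous v → P ≤ u → P ≤ v → ∀ D,
      (∀ x, |u x - v x| ≤ ω x * D) → ∀ x, |T u x - T v x| ≤ K * D * ω x) :
    ∃ u, Continuous u ∧ P ≤ u ∧ ∀ x, u x = P x + T u x := by
  let U (v : X →ᵇ ℝ) (x : X) : ℝ := P x + ω x * max (v x) 0
  have hUc (v : X →ᵇ ℝ) : Continuous (U v) :=
    hP.add (hω.mul (v.continuous.max continuous_const))
  have hPU (v : X →ᵇ ℝ) : P ≤ U v := fun x ↦
    le_add_of_nonneg_right (mul_nonneg (hω₀ x).le (le_max_right _ _))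
  choose C hC using fun v ↦ hTb (U v) (hUc v) (hPU v)
  let Φ (v : X →ᵇ ℝ) : X →ᵇ ℝ := BoundedContinuousFunction.ofNormedAddCommGroup
    (fun x ↦ T (U v) x / ω x) ((hTc _ (hUc v) (hPU v)).div₀ hω fun x ↦ (hω₀ x).ne') (C v)
    fun x ↦ by
      rw [Real.norm_of_nonneg (div_nonneg (hT₀ _ (hUc v) (hPU v) x) (hω₀ x).le),
        div_le_iff₀ (hω₀ x)]
      exact hC v x
  have hΦ : ContractingWith K Φ := by
    refine ⟨hK, LipschitzWith.of_dist_le_mul fun v w ↦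
      (BoundedContinuousFunction.dist_le (by positivity)).2 fun x ↦ ?_⟩
    have hU_sub (x : X) : |U v x - U w x| ≤ ω x * dist v w := by
      rw [add_sub_add_left_eq_sub, ← mul_sub, abs_mul, abs_of_pos (hω₀ x)]
      gcongr
      · exact (hω₀ x).le
      · exact (abs_max_sub_max_le_abs _ _ _).trans
          (BoundedContinuousFunction.dist_coe_le_dist (f := v) (g := w) x)
    rw [Real.dist_eq, BoundedContinuousFunction.coe_ofNormedAddCommGroup,
      BoundedContinuousFunction.coe_ofNormedAddCommGroup, ← sub_div, abs_div,
      abs_of_pos (hω₀ x), div_le_iff₀ (hω₀ x)]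
    exact hTl _ _ (hUc v) (hUc w) (hPU v) (hPU w) _ hU_sub x
  let v := hΦ.fixedPoint
  have hv (x : X) : v x = T (U v) x / ω x := congrArg (· x) hΦ.fixedPoint_isFixedPt.symm
  refine ⟨U v, hUc v, hPU v, fun x ↦ ?_⟩
  have hv₀ : 0 ≤ v x := hv x ▸ div_nonneg (hT₀ _ (hUc v) (hPU v) x) (hω₀ x).le
  calc U v x = P x + ω x * v x := by rw [← max_eq_left hv₀]
    _ = P x + T (U v) x := by rw [hv x, mul_div_cancel₀ _ (hω₀ x).ne']

end FixedPoint

section IntegralEquation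

theorem abs_rpow_neg_sub_rpow_neg_le {q p a b : ℝ} (hq : 0 ≤ q) (hp : 0 < p) (ha : p ≤ a)
    (hb : p ≤ b) : |a ^ (-q) - b ^ (-q)| ≤ q * p ^ (-q - 1) * |a - b| := by
  refine Convex.norm_image_sub_le_of_norm_hasDerivWithin_le (f := fun t : ℝ ↦ t ^ (-q))
    (fun t ht ↦ (hasDerivAt_rpow_const (Or.inl (hp.trans_le ht).ne')).hasDerivWithinAt)
    (fun t (ht : p ≤ t) ↦ ?_) (convex_Ici p) hb ha
  rw [norm_mul, norm_neg, norm_of_nonneg hq, norm_of_nonneg (rpow_nonneg (hp.le.trans ht) _)]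
  gcongr q * ?_
  exact rpow_le_rpow_of_nonpos hp ht (by linarith)

theorem rpow_neg_le_mul_rpow_neg {m w a s : ℝ} (hm : 0 < m) (hw : 0 < w) (hs : 0 ≤ s)
    (h : m * w ≤ a) : a ^ (-s) ≤ m ^ (-s) * w ^ (-s) := by
  rw [← mul_rpow hm.le hw.le]
  exact rpow_le_rpow_of_nonpos (by positivity) h (by linarith)

-- The surplus decay `p ^ (-(q - 1) / 2)`, spent on the constant `M`, is what makes the contraction
-- constant small for large `M`; the remaining decay keeps the difference integrable.
theorem abs_rpow_neg_sub_rpow_neg_le_mul_weight {q m M w p a b D : ℝ} (hq : 1 < q) (hm : 0 < m)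
    (hM : 0 < M) (hw : 0 < w) (hmp : m * w ≤ p) (hMp : M ≤ p) (ha : p ≤ a) (hb : p ≤ b)
    (hab : |a - b| ≤ w * D) :
    |a ^ (-q) - b ^ (-q)| ≤
      q * (M ^ (-((q - 1) / 2)) * m ^ (-((q + 3) / 2))) * D * w ^ (-((q + 1) / 2)) := by
  have hp : 0 < p := hM.trans_le hMp
  have split_decay :
      p ^ (-q - 1) ≤ M ^ (-((q - 1) / 2)) * (m ^ (-((q + 3) / 2)) * w ^ (-((q + 3) / 2))) := by
    rw [show -q - 1 = -((q - 1) / 2) + -((q + 3) / 2) by ring, rpow_add hp]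
    gcongr ?_ * ?_
    · exact rpow_le_rpow_of_nonpos hM hMp (by linarith)
    · exact rpow_neg_le_mul_rpow_neg hm hw (by linarith) hmp
  have merge_weight : w ^ (-((q + 1) / 2)) = w ^ (-((q + 3) / 2)) * w := by
    rw [← rpow_add_one hw.ne']
    ring_nf
  calc |a ^ (-q) - b ^ (-q)| ≤ q * p ^ (-q - 1) * |a - b| :=
        abs_rpow_neg_sub_rpow_neg_le (by linarith) hp ha hb
    _ ≤ q * (M ^ (-((q - 1) / 2)) * (m ^ (-((q + 3) / 2)) * w ^ (-((q + 3) / 2)))) * (w * D) := by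
        gcongr
    _ = q * (M ^ (-((q - 1) / 2)) * m ^ (-((q + 3) / 2))) * D * w ^ (-((q + 1) / 2)) := by
        rw [merge_weight]; ring

theorem integrable_rpow_neg_one_add_norm_sq_mul_inv_norm {E : Type*} [NormedAddCommGroup E]
    [NormedSpace ℝ E] [FiniteDimensional ℝ E] [MeasurableSpace E] [BorelSpace E] {μ : Measure E}
    [μ.IsAddHaarMeasure] {s : ℝ} (hd : 2 ≤ Module.finrank ℝ E)
    (hs : Module.finrank ℝ E < 2 * s + 1) :
    Integrable (fun y : E ↦ (1 + ‖y‖ ^ 2) ^ (-s) * ‖y‖⁻¹) μ := by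
  have : Nontrivial E := Module.nontrivial_of_finrank_pos (R := ℝ) (by lia)
  obtain ⟨d, hd⟩ := Nat.exists_eq_add_of_le' hd
  rw [integrable_fun_norm_addHaar (E := E) μ (f := fun r : ℝ ↦ (1 + r ^ 2) ^ (-s) * r⁻¹), hd]
  rw [hd] at hs
  push_cast at hs
  have radial := integrable_rpow_neg_one_add_norm_sq (E := ℝ) (μ := volume) (r := 2 * s - d)
    (by simp; linarith)
  refine radial.integrableOn.mono' (Measurable.aestronglyMeasurable (by fun_prop))
    ((ae_restrict_iff' measurableSet_Ioi).2 (Eventually.of_forall fun r (hr : 0 < r) ↦ ?_))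
  have hr_le : r ≤ (1 + r ^ 2) ^ (1 / 2 : ℝ) := by
    rw [← sqrt_eq_rpow]
    exact le_sqrt_of_sq_le (by linarith)
  rw [norm_of_nonneg (by positivity), norm_of_nonneg hr.le, smul_eq_mul]
  calc r ^ (d + 2 - 1) * ((1 + r ^ 2) ^ (-s) * r⁻¹) = (1 + r ^ 2) ^ (-s) * r ^ d := by
        rw [Nat.add_succ_sub_one, pow_succ]; field_simp
    _ ≤ (1 + r ^ 2) ^ (-s) * ((1 + r ^ 2) ^ (1 / 2 : ℝ)) ^ d := by gcongr
    _ = (1 + r ^ 2) ^ (-(2 * s - d) / 2) := by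
        rw [← rpow_mul_natCast (by positivity), ← rpow_add (by positivity)]; ring_nf

theorem integrable_rpow_neg_mul_inv_norm {q m : ℝ} {u : ℝ³ → ℝ} (hq : 1 < q) (hm : 0 < m)
    (hu : Continuous u) (hmu : ∀ y, m * (1 + ‖y‖ ^ 2) ≤ u y) :
    Integrable fun y ↦ u y ^ (-q) * ‖y‖⁻¹ := by
  have hpos (y : ℝ³) : 0 < u y := (by positivity : 0 < m * (1 + ‖y‖ ^ 2)).trans_le (hmu y)
  have weight : Integrable fun y : ℝ³ ↦ (1 + ‖y‖ ^ 2) ^ (-q) * ‖y‖⁻¹ :=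
    integrable_rpow_neg_one_add_norm_sq_mul_inv_norm (by simp) (by simp; linarith)
  refine (weight.const_mul (m ^ (-q))).mono' ?_ (Eventually.of_forall fun y ↦ ?_)
  · exact (hu.rpow_const fun y ↦ Or.inl (hpos y).ne').aestronglyMeasurable.mul
      measurable_norm.inv.aestronglyMeasurable
  · have := rpow_nonneg (hpos y).le (-q)
    rw [norm_of_nonneg (by positivity), ← mul_assoc]
    gcongr
    exact rpow_neg_le_mul_rpow_neg hm (by positivity) (by linarith) (hmu y)

theorem abs_normPotential_rpow_neg_sub_le {q m M D : ℝ} {P u v : ℝ³ → ℝ} (hq : 1 < q) (hm : 0 < m)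
    (hM : 0 < M) (hmP : ∀ y, m * (1 + ‖y‖ ^ 2) ≤ P y) (hMP : ∀ y, M ≤ P y)
    (hu : Continuous u) (hv : Continuous v) (hPu : P ≤ u) (hPv : P ≤ v)
    (huv : ∀ y, |u y - v y| ≤ (1 + ‖y‖ ^ 2) * D) (x : ℝ³) :
    |normPotential volume (fun y ↦ u y ^ (-q)) x - normPotential volume (fun y ↦ v y ^ (-q)) x| ≤
      ‖x‖ ^ 2 / 2 * (q * (M ^ (-((q - 1) / 2)) * m ^ (-((q + 3) / 2))) * D *
        ∫ y : ℝ³, (1 + ‖y‖ ^ 2) ^ (-((q + 1) / 2)) * ‖y‖⁻¹) := by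
  have measurable_rpow {w : ℝ³ → ℝ} (hw : Continuous w) (hPw : P ≤ w) :
      AEStronglyMeasurable fun y ↦ w y ^ (-q) :=
    (hw.rpow_const fun y ↦ Or.inl
      (hM.trans_le ((hMP y).trans (hPw y))).ne').aestronglyMeasurable
  have integrable_rpow {w : ℝ³ → ℝ} (hw : Continuous w) (hPw : P ≤ w) :
      Integrable fun y ↦ w y ^ (-q) * ‖y‖⁻¹ :=
    integrable_rpow_neg_mul_inv_norm hq hm hw fun y ↦ (hmP y).trans (hPw y)
  have weight : Integrable fun y : ℝ³ ↦ (1 + ‖y‖ ^ 2) ^ (-((q + 1) / 2)) * ‖y‖⁻¹ :=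
    integrable_rpow_neg_one_add_norm_sq_mul_inv_norm (by simp) (by simp; linarith)
  rw [← integral_const_mul]
  simp only [← mul_assoc _ _ ‖_‖⁻¹]
  refine abs_normPotential_sub_le (measurable_rpow hu hPu) (measurable_rpow hv hPv)
    (integrable_rpow hu hPu) (integrable_rpow hv hPv) (fun y ↦ ?_) ?_ x
  · exact abs_rpow_neg_sub_rpow_neg_le_mul_weight hq hm hM (by positivity) (hmP y) (hMP y)
      (hPu y) (hPv y) (huv y)
  · simpa only [← mul_assoc] using
      weight.const_mul (q * (M ^ (-((q - 1) / 2)) * m ^ (-((q + 3) / 2))) * D)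

theorem exists_solution_integral_equation_of_le {q b m M : ℝ} {P : ℝ³ → ℝ} (hq : 1 < q)
    (hb : 0 ≤ b) (hm : 0 < m) (hM : 0 < M) (hP : Continuous P)
    (hmP : ∀ y, m * (1 + ‖y‖ ^ 2) ≤ P y) (hMP : ∀ y, M ≤ P y)
    (small : b * (q * (M ^ (-((q - 1) / 2)) * m ^ (-((q + 3) / 2)))) *
      ∫ y : ℝ³, (1 + ‖y‖ ^ 2) ^ (-((q + 1) / 2)) * ‖y‖⁻¹ ≤ 1) :
    ∃ u : ℝ³ → ℝ, Continuous u ∧ P ≤ u ∧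
      ∀ x, u x = P x + b * normPotential volume (fun y ↦ u y ^ (-q)) x := by
  have hpos {u : ℝ³ → ℝ} (hPu : P ≤ u) (y : ℝ³) : 0 < u y := hM.trans_le ((hMP y).trans (hPu y))
  have hf {u : ℝ³ → ℝ} (hu : Continuous u) (hPu : P ≤ u) : Continuous fun y ↦ u y ^ (-q) :=
    hu.rpow_const fun y ↦ Or.inl (hpos hPu y).ne'
  have hf₀ {u : ℝ³ → ℝ} (hPu : P ≤ u) (y : ℝ³) : 0 ≤ u y ^ (-q) := rpow_nonneg (hpos hPu y).le _
  have hi {u : ℝ³ → ℝ} (hu : Continuous u) (hPu : P ≤ u) :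
      Integrable fun y ↦ u y ^ (-q) * ‖y‖⁻¹ :=
    integrable_rpow_neg_mul_inv_norm hq hm hu fun y ↦ (hmP y).trans (hPu y)
  refine exists_continuous_eq_add (K := 1 / 2) (ω := fun x : ℝ³ ↦ 1 + ‖x‖ ^ 2)
    (T := fun u x ↦ b * normPotential volume (fun y ↦ u y ^ (-q)) x)
    (by fun_prop) (fun x ↦ by positivity) hP (by norm_num) (fun u hu hPu ↦ ?_)
    (fun u _ hPu x ↦ mul_nonneg hb (normPotential_nonneg (hf₀ hPu) x)) (fun u hu hPu ↦ ?_)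
    (fun u v hu hv hPu hPv D huv x ↦ ?_)
  · exact continuous_const.mul
      (contDiff_normPotential (n := 0) (contDiff_zero.2 (hf hu hPu)) (hi hu hPu)).continuous
  · have total_nonneg : 0 ≤ ∫ y, u y ^ (-q) * ‖y‖⁻¹ :=
      integral_nonneg fun y ↦ mul_nonneg (hf₀ hPu y) (inv_nonneg.2 (norm_nonneg y))
    refine ⟨b * ∫ y, u y ^ (-q) * ‖y‖⁻¹, fun x ↦ ?_⟩
    calc b * normPotential volume (fun y ↦ u y ^ (-q)) x
        ≤ b * (‖x‖ ^ 2 / 2 * ∫ y, u y ^ (-q) * ‖y‖⁻¹) := by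
          gcongr
          exact normPotential_le (hf hu hPu).aestronglyMeasurable (hf₀ hPu) (hi hu hPu) x
      _ = (b * ∫ y, u y ^ (-q) * ‖y‖⁻¹) * (‖x‖ ^ 2 / 2) := by ring
      _ ≤ (b * ∫ y, u y ^ (-q) * ‖y‖⁻¹) * (1 + ‖x‖ ^ 2) := by gcongr; linarith [sq_nonneg ‖x‖]
  · have hD : 0 ≤ D := by simpa using (abs_nonneg _).trans (huv 0)
    rw [← mul_sub, abs_mul, abs_of_nonneg hb]
    refine (mul_le_mul_of_nonneg_left
      (abs_normPotential_rpow_neg_sub_le hq hm hM hmP hMP hu hv hPu hPv huv x) hb).trans ?_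
    have scaled := mul_le_mul_of_nonneg_right small (by positivity : 0 ≤ ‖x‖ ^ 2 / 2 * D)
    simp only [NNReal.coe_div, NNReal.coe_one, NNReal.coe_ofNat]
    linarith

theorem exists_rpow_neg_mul_le_one {s : ℝ} (hs : 0 < s) (L : ℝ) :
    ∃ M : ℝ, 1 ≤ M ∧ M ^ (-s) * L ≤ 1 := by
  have h := (tendsto_rpow_neg_atTop hs).mul_const L
  rw [zero_mul] at h
  exact ((eventually_ge_atTop 1).and (h.eventually_le_const one_pos)).exists

theorem exists_solution_integral_equation {q b κ : ℝ} {Q : ℝ³ → ℝ} (hq : 1 < q) (hb : 0 ≤ b)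
    (hκ : 0 < κ) (hQ : Continuous Q) (hκQ : ∀ x, κ * ‖x‖ ^ 2 ≤ Q x) :
    ∃ (m M : ℝ) (u : ℝ³ → ℝ), Continuous u ∧ 0 < m ∧ (∀ x, m * (1 + ‖x‖ ^ 2) ≤ u x) ∧
      ∀ x, u x = M + Q x + b * normPotential volume (fun y ↦ u y ^ (-q)) x := by
  obtain ⟨m, hm, hm₁, hmκ⟩ : ∃ m : ℝ, 0 < m ∧ m ≤ 1 ∧ m ≤ κ :=
    ⟨min 1 κ, lt_min one_pos hκ, min_le_left _ _, min_le_right _ _⟩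
  obtain ⟨M, hM, small⟩ := exists_rpow_neg_mul_le_one (s := (q - 1) / 2) (by linarith)
    (b * q * m ^ (-((q + 3) / 2)) * ∫ y : ℝ³, (1 + ‖y‖ ^ 2) ^ (-((q + 1) / 2)) * ‖y‖⁻¹)
  have hMP (y : ℝ³) : M ≤ M + Q y := by linarith [hκQ y, mul_nonneg hκ.le (sq_nonneg ‖y‖)]
  have hmP (y : ℝ³) : m * (1 + ‖y‖ ^ 2) ≤ M + Q y := by
    linarith [hκQ y, mul_le_mul_of_nonneg_right hmκ (sq_nonneg ‖y‖)]
  obtain ⟨u, hu, hPu, heq⟩ := exists_solution_integral_equation_of_le (P := fun y ↦ M + Q y) hq hb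
    hm (one_pos.trans_le hM) (by fun_prop) hmP hMP (by linarith)
  exact ⟨m, M, u, hu, hm, fun x ↦ (hmP x).trans (hPu x), heq⟩

end IntegralEquation

section Bootstrap

theorem normPotential_const_mul {E : Type*} [NormedAddCommGroup E] [InnerProductSpace ℝ E]
    [MeasurableSpace E] (μ : Measure E) (b : ℝ) (f : E → ℝ) (x : E) :
    normPotential μ (fun y ↦ b * f y) x = b * normPotential μ f x := by
  simp only [normPotential, mul_assoc, integral_const_mul]

theorem contDiff_of_eq_add_normPotential {E : Type} [NormedAddCommGroup E] [InnerProductSpace ℝ E]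
    [FiniteDimensional ℝ E] [Nontrivial E] [MeasurableSpace E] [BorelSpace E] {μ : Measure E}
    [μ.IsAddHaarMeasure] {q b : ℝ} {P u : E → ℝ} {N : ℕ} (hP : ContDiff ℝ N P) (hu : Continuous u)
    (hpos : ∀ x, 0 < u x) (hi : Integrable (fun y ↦ u y ^ (-q) * ‖y‖⁻¹) μ)
    (heq : ∀ x, u x = P x + b * normPotential μ (fun y ↦ u y ^ (-q)) x) : ContDiff ℝ N u := by
  suffices bootstrap : ∀ n ≤ N, ContDiff ℝ n u from bootstrap N le_rfl
  intro n hn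
  induction n with
  | zero => exact contDiff_zero.2 hu
  | succ n ih =>
    have hf : ContDiff ℝ n fun y ↦ u y ^ (-q) :=
      (ih (Nat.le_of_succ_le hn)).rpow_const_of_ne fun x ↦ (hpos x).ne'
    rw [funext heq]
    exact (hP.of_le (by exact_mod_cast hn)).add (contDiff_const.mul (contDiff_normPotential hf hi))

theorem laplacian_laplacian_of_eq_add_normPotential {P u f : ℝ³ → ℝ} (hP : ContDiff ℝ 4 P)
    (hP₀ : Δ (Δ P) = 0) (hf : ContDiff ℝ 4 f) (hi : Integrable fun y ↦ f y * ‖y‖⁻¹)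
    (heq : ∀ x, u x = P x + biharmonicConst⁻¹ * normPotential volume f x) (x : ℝ³) :
    Δ (Δ u) x + f x = 0 := by
  have hf' : ContDiff ℝ 4 fun y ↦ biharmonicConst⁻¹ * f y := contDiff_const.mul hf
  have hi' : Integrable fun y ↦ biharmonicConst⁻¹ * f y * ‖y‖⁻¹ := by
    simpa only [mul_assoc] using hi.const_mul biharmonicConst⁻¹
  simp only [← normPotential_const_mul] at heq
  rw [funext heq, laplacian_laplacian_add hP
    ((contDiff_normPotential (n := 4) hf' hi').of_le le_self_add), hP₀, zero_add,
    laplacian_laplacian_normPotential hf' hi', mul_inv_cancel_left₀ biharmonicConst_pos.ne',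
    neg_add_cancel]

theorem exists_solution_asymptotic_to {q κ : ℝ} {Q : ℝ³ → ℝ} (hq : 1 < q) (hκ : 0 < κ)
    (hQ : ContDiff ℝ 4 Q) (hQ₀ : Δ (Δ Q) = 0) (hκQ : ∀ x, κ * ‖x‖ ^ 2 ≤ Q x) :
    ∃ u : ℝ³ → ℝ, ContDiff ℝ 4 u ∧ (∀ x, 0 < u x) ∧ (∀ x, Δ (Δ u) x + u x ^ (-q) = 0) ∧
      Tendsto (fun x ↦ (u x - Q x) / ‖x‖ ^ 2) (cocompact ℝ³) (𝓝 0) := by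
  obtain ⟨m, M, u, hu, hm, hmu, heq⟩ := exists_solution_integral_equation hq
    (inv_nonneg.2 biharmonicConst_pos.le) hκ hQ.continuous hκQ
  have hpos (x : ℝ³) : 0 < u x := (by positivity : 0 < m * (1 + ‖x‖ ^ 2)).trans_le (hmu x)
  have hi : Integrable fun y ↦ u y ^ (-q) * ‖y‖⁻¹ := integrable_rpow_neg_mul_inv_norm hq hm hu hmu
  have hMQ : ContDiff ℝ 4 fun x ↦ M + Q x := contDiff_const.add hQ
  have hMQ₀ : Δ (Δ fun x ↦ M + Q x) = 0 := by
    rw [laplacian_laplacian_add contDiff_const hQ, hQ₀, InnerProductSpace.laplacian_const]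
    simp [Pi.zero_def]
  have hu₄ : ContDiff ℝ 4 u := contDiff_of_eq_add_normPotential (N := 4) hMQ hu hpos hi heq
  have hf : ContDiff ℝ 4 fun y ↦ u y ^ (-q) := hu₄.rpow_const_of_ne fun x ↦ (hpos x).ne'
  refine ⟨u, hu₄, hpos, laplacian_laplacian_of_eq_add_normPotential hMQ hMQ₀ hf hi heq, ?_⟩
  have hconst : Tendsto (fun x : ℝ³ ↦ M / ‖x‖ ^ 2) (cocompact ℝ³) (𝓝 0) :=
    (tendsto_const_nhds.div_atTop
      ((tendsto_pow_atTop two_ne_zero).comp tendsto_norm_cocompact_atTop))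
  have hpotential :=
    (tendsto_normPotential_div_norm_sq hf.continuous.aestronglyMeasurable hi).const_mul
      biharmonicConst⁻¹
  rw [mul_zero] at hpotential
  refine (add_zero (0 : ℝ) ▸ hconst.add hpotential).congr fun x ↦ ?_
  rw [heq x]
  ring

end Bootstrap

section OrderLimits

variable {X Y α : Type*} [ConditionallyCompleteLinearOrder α] [TopologicalSpace α]
  [OrderTopology α] [DenselyOrdered α] {l : Filter X} {l' : Filter Y} [l.NeBot] [l'.NeBot]
  {R r : X → α} {a : α} {γ : Y → X}

theorem liminf_eq_of_le_of_tendsto_comp [NoMaxOrder α] (hr : Tendsto r l (𝓝 a))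
    (hrR : r ≤ᶠ[l] R) (hγ : Tendsto γ l' l) (hRγ : Tendsto (R ∘ γ) l' (𝓝 a)) :
    liminf R l = a := by
  have frequently_le {c : α} (hc : a < c) : ∃ᶠ x in l, R x ≤ c :=
    hγ.frequently ((hRγ.eventually_lt_const hc).mono fun t ht ↦ ht.le).frequently
  obtain ⟨c, hc⟩ := exists_gt a
  refine le_antisymm (le_of_forall_gt_imp_ge_of_dense fun c hc ↦
    liminf_le_of_frequently_le (frequently_le hc) (hr.isBoundedUnder_ge.mono_ge hrR)) ?_
  rw [← hr.liminf_eq]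
  exact liminf_le_liminf hrR hr.isBoundedUnder_ge (.of_frequently_le (frequently_le hc))

theorem limsup_eq_of_le_of_tendsto_comp [NoMinOrder α] (hr : Tendsto r l (𝓝 a))
    (hRr : R ≤ᶠ[l] r) (hγ : Tendsto γ l' l) (hRγ : Tendsto (R ∘ γ) l' (𝓝 a)) :
    limsup R l = a :=
  liminf_eq_of_le_of_tendsto_comp (α := αᵒᵈ) hr hRr hγ hRγ

end OrderLimits

section Asymptotics

variable {E : Type*} [NormedAddCommGroup E] [NormedSpace ℝ E] [ProperSpace E] {u Q : E → ℝ}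
  {κ : ℝ} {d e : E}

theorem tendsto_add_smul_cocompact (p : E) (hd : d ≠ 0) :
    Tendsto (fun t : ℝ ↦ p + t • d) atTop (cocompact E) := by
  rw [← Metric.cobounded_eq_cocompact, ← tendsto_norm_atTop_iff_cobounded]
  refine tendsto_atTop_mono (fun t ↦ ?_) (tendsto_atTop_add_const_right _ (-‖p‖)
    (tendsto_id.atTop_mul_const (norm_pos_iff.2 hd)))
  have triangle := norm_sub_le (p + t • d) p
  rw [add_sub_cancel_left, norm_smul, Real.norm_eq_abs] at triangle
  have := mul_le_mul_of_nonneg_right (le_abs_self t) (norm_nonneg d)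
  simp only [id_eq]
  linarith

theorem tendsto_comp_add_smul_div_sq (hQ : Continuous Q)
    (hQs : ∀ (t : ℝ) x, Q (t • x) = t ^ 2 * Q x)
    (hu : Tendsto (fun x ↦ (u x - Q x) / ‖x‖ ^ 2) (cocompact E) (𝓝 0)) (p : E) (hd : d ≠ 0) :
    Tendsto (fun t : ℝ ↦ u (p + t • d) / t ^ 2) atTop (𝓝 (Q d)) := by
  have direction : Tendsto (fun t : ℝ ↦ t⁻¹ • p + d) atTop (𝓝 d) := by
    simpa using ((tendsto_inv_atTop_zero (𝕜 := ℝ)).smul_const p).add_const d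
  have line := tendsto_add_smul_cocompact p hd
  have main := ((hQ.tendsto d).comp direction).add
    ((hu.comp line).mul (((continuous_norm.pow 2).tendsto d).comp direction))
  rw [zero_mul, add_zero] at main
  refine main.congr' ?_
  filter_upwards [(tendsto_norm_cocompact_atTop.comp line).eventually_gt_atTop 0,
    eventually_gt_atTop 0] with t hline ht
  have factor : p + t • d = t • (t⁻¹ • p + d) := by
    rw [smul_add, smul_inv_smul₀ ht.ne']
  simp only [Function.comp_apply, factor, norm_smul] at hline ⊢
  have hz : ‖t⁻¹ • p + d‖ ≠ 0 := (pos_of_mul_pos_right hline (norm_nonneg t)).ne'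
  rw [hQs, Real.norm_of_nonneg ht.le]
  simp only [Pi.pow_apply]
  generalize t⁻¹ • p + d = z at hz
  field_simp
  ring

theorem not_radial_of_asymptotic_to (hQ : Continuous Q)
    (hQs : ∀ (t : ℝ) x, Q (t • x) = t ^ 2 * Q x)
    (hu : Tendsto (fun x ↦ (u x - Q x) / ‖x‖ ^ 2) (cocompact E) (𝓝 0)) (hd : d ≠ 0)
    (hde : ‖d‖ = ‖e‖) (hQde : Q d ≠ Q e) :
    ¬ ∃ p, ∀ x y, ‖x - p‖ = ‖y - p‖ → u x = u y := by
  rintro ⟨p, radial⟩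
  have he : e ≠ 0 := norm_ne_zero_iff.1 (hde ▸ norm_ne_zero_iff.2 hd)
  have along_d := tendsto_comp_add_smul_div_sq hQ hQs hu p hd
  have along_e := tendsto_comp_add_smul_div_sq hQ hQs hu p he
  refine hQde (tendsto_nhds_unique (along_d.congr fun t ↦ ?_) along_e)
  rw [radial (p + t • d) (p + t • e) (by simp [norm_smul, hde])]

theorem tendsto_comp_smul_div_norm_sq (hQ : Continuous Q)
    (hQs : ∀ (t : ℝ) x, Q (t • x) = t ^ 2 * Q x)
    (hu : Tendsto (fun x ↦ (u x - Q x) / ‖x‖ ^ 2) (cocompact E) (𝓝 0)) (hd : d ≠ 0)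
    (hQd : Q d = κ * ‖d‖ ^ 2) :
    Tendsto ((fun x ↦ u x / ‖x‖ ^ 2) ∘ fun t : ℝ ↦ 0 + t • d) atTop (𝓝 κ) := by
  have hd' : ‖d‖ ^ 2 ≠ 0 := pow_ne_zero 2 (norm_ne_zero_iff.2 hd)
  have main := (tendsto_comp_add_smul_div_sq hQ hQs hu 0 hd).div_const (‖d‖ ^ 2)
  rw [hQd, mul_div_cancel_right₀ _ hd'] at main
  refine main.congr fun t ↦ ?_
  simp only [Function.comp_apply, zero_add, norm_smul, mul_pow, Real.norm_eq_abs, sq_abs, div_div]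

theorem liminf_div_norm_sq_eq (hQ : Continuous Q) (hQs : ∀ (t : ℝ) x, Q (t • x) = t ^ 2 * Q x)
    (hu : Tendsto (fun x ↦ (u x - Q x) / ‖x‖ ^ 2) (cocompact E) (𝓝 0)) (hd : d ≠ 0)
    (hκ : ∀ x, κ * ‖x‖ ^ 2 ≤ Q x) (hQd : Q d = κ * ‖d‖ ^ 2) :
    liminf (fun x ↦ u x / ‖x‖ ^ 2) (cocompact E) = κ := by
  have line := tendsto_add_smul_cocompact 0 hd
  have : (cocompact E).NeBot := line.neBot
  refine liminf_eq_of_le_of_tendsto_comp (add_zero κ ▸ hu.const_add κ) ?_ line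
    (tendsto_comp_smul_div_norm_sq hQ hQs hu hd hQd)
  filter_upwards [tendsto_norm_cocompact_atTop.eventually_gt_atTop 0] with x hx
  have := (le_div_iff₀ (pow_pos hx 2)).2 (hκ x)
  rw [sub_div]
  linarith

theorem limsup_div_norm_sq_eq (hQ : Continuous Q) (hQs : ∀ (t : ℝ) x, Q (t • x) = t ^ 2 * Q x)
    (hu : Tendsto (fun x ↦ (u x - Q x) / ‖x‖ ^ 2) (cocompact E) (𝓝 0)) (hd : d ≠ 0)
    (hκ : ∀ x, Q x ≤ κ * ‖x‖ ^ 2) (hQd : Q d = κ * ‖d‖ ^ 2) :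
    limsup (fun x ↦ u x / ‖x‖ ^ 2) (cocompact E) = κ := by
  have line := tendsto_add_smul_cocompact 0 hd
  have : (cocompact E).NeBot := line.neBot
  refine limsup_eq_of_le_of_tendsto_comp (add_zero κ ▸ hu.const_add κ) ?_ line
    (tendsto_comp_smul_div_norm_sq hQ hQs hu hd hQd)
  filter_upwards [tendsto_norm_cocompact_atTop.eventually_gt_atTop 0] with x hx
  have := (div_le_iff₀ (pow_pos hx 2)).2 (hκ x)
  rw [sub_div]
  linarith

end Asymptotics

section StretchedForm

variable {E : Type*} [NormedAddCommGroup E] [InnerProductSpace ℝ E] {κ₁ κ₂ : ℝ} {e d x : E}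

/-- For a unit vector `e`, the symmetric bilinear form with eigenvalue `κ₂` on `ℝ e` and `κ₁` on the
orthogonal complement. Its quadratic form is the prescribed growth of the solution at infinity. -/
noncomputable def stretchedForm (κ₁ κ₂ : ℝ) (e : E) : E →L[ℝ] E →L[ℝ] ℝ :=
  let innerForm : E →L[ℝ] E →L[ℝ] ℝ := innerSL ℝ
  κ₁ • innerForm + (κ₂ - κ₁) • (innerSL ℝ e).smulRight (innerSL ℝ e)

theorem stretchedForm_apply_self (κ₁ κ₂ : ℝ) (e x : E) :
    stretchedForm κ₁ κ₂ e x x = κ₁ * ‖x‖ ^ 2 + (κ₂ - κ₁) * ⟪e, x⟫ ^ 2 := by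
  simp [stretchedForm, innerSL_apply_apply ℝ, sq]

theorem stretchedForm_smul_smul (t : ℝ) (x : E) :
    stretchedForm κ₁ κ₂ e (t • x) (t • x) = t ^ 2 * stretchedForm κ₁ κ₂ e x x := by
  simp [sq, mul_assoc]

theorem contDiff_stretchedForm_apply_self {n : WithTop ℕ∞} :
    ContDiff ℝ n fun x ↦ stretchedForm κ₁ κ₂ e x x :=
  (stretchedForm κ₁ κ₂ e).contDiff.clm_apply contDiff_id

theorem stretchedForm_apply_self_of_orthogonal (h : ⟪e, d⟫ = 0) :
    stretchedForm κ₁ κ₂ e d d = κ₁ * ‖d‖ ^ 2 := by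
  simp [stretchedForm_apply_self, h]

theorem stretchedForm_self_self (he : ‖e‖ = 1) :
    stretchedForm κ₁ κ₂ e e e = κ₂ * ‖e‖ ^ 2 := by
  simp [stretchedForm_apply_self, he]

theorem mul_norm_sq_le_stretchedForm (hκ : κ₁ ≤ κ₂) (x : E) :
    κ₁ * ‖x‖ ^ 2 ≤ stretchedForm κ₁ κ₂ e x x := by
  rw [stretchedForm_apply_self]
  exact le_add_of_nonneg_right (mul_nonneg (sub_nonneg.2 hκ) (sq_nonneg _))

theorem stretchedForm_le_mul_norm_sq (hκ : κ₁ ≤ κ₂) (he : ‖e‖ = 1) (x : E) :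
    stretchedForm κ₁ κ₂ e x x ≤ κ₂ * ‖x‖ ^ 2 := by
  have cauchy_schwarz : ⟪e, x⟫ ^ 2 ≤ ‖x‖ ^ 2 :=
    sq_le_sq' (by simpa [he] using neg_le_of_abs_le (abs_real_inner_le_norm e x))
      (by simpa [he] using real_inner_le_norm e x)
  rw [stretchedForm_apply_self]
  linarith [mul_le_mul_of_nonneg_left cauchy_schwarz (sub_nonneg.2 hκ)]

end StretchedForm

/-- **Theorem.** For `q > 1` and `0 < κ₁ < κ₂` there exists a positive `C⁴` solution of
`Δ²u + u^{-q} = 0` on ℝ³ which is not radially symmetric about any point, and with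
`liminf_{|x|→∞} u(x)/|x|² = κ₁` and `limsup_{|x|→∞} u(x)/|x|² = κ₂`. -/
theorem exists_nonradial_solution_quadratic_growth
    (q κ₁ κ₂ : ℝ) (hq : 1 < q) (hκ₁ : 0 < κ₁) (hκ : κ₁ < κ₂) :
    ∃ u : EuclideanSpace ℝ (Fin 3) → ℝ,
      ContDiff ℝ 4 u ∧ (∀ x, 0 < u x) ∧
      (∀ x, laplacian (laplacian u) x + (u x) ^ (-q) = 0) ∧
      (¬ ∃ p : EuclideanSpace ℝ (Fin 3), ∀ x y, ‖x - p‖ = ‖y - p‖ → u x = u y) ∧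
      liminf (fun x => u x / ‖x‖ ^ 2) (cocompact (EuclideanSpace ℝ (Fin 3))) = κ₁ ∧
      limsup (fun x => u x / ‖x‖ ^ 2) (cocompact (EuclideanSpace ℝ (Fin 3))) = κ₂ := by
  let e : ℝ³ := EuclideanSpace.single 0 1
  let d : ℝ³ := EuclideanSpace.single 1 1
  let Q (x : ℝ³) : ℝ := stretchedForm κ₁ κ₂ e x x
  have he : ‖e‖ = 1 := by simp [e]
  have hd : ‖d‖ = 1 := by simp [d]
  have hQe : Q e = κ₂ * ‖e‖ ^ 2 := stretchedForm_self_self he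
  have hQd : Q d = κ₁ * ‖d‖ ^ 2 := stretchedForm_apply_self_of_orthogonal
    (by simp [e, d, EuclideanSpace.inner_single_left])
  have he₀ : e ≠ 0 := norm_ne_zero_iff.1 (by simp [he])
  have hd₀ : d ≠ 0 := norm_ne_zero_iff.1 (by simp [hd])
  have hQ : ContDiff ℝ 4 Q := contDiff_stretchedForm_apply_self
  have hQs (t : ℝ) (x : ℝ³) : Q (t • x) = t ^ 2 * Q x := stretchedForm_smul_smul t x
  have lower (x : ℝ³) : κ₁ * ‖x‖ ^ 2 ≤ Q x := mul_norm_sq_le_stretchedForm hκ.le x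
  have upper (x : ℝ³) : Q x ≤ κ₂ * ‖x‖ ^ 2 := stretchedForm_le_mul_norm_sq hκ.le he x
  obtain ⟨u, hu, hpos, heq, hasymp⟩ := exists_solution_asymptotic_to hq hκ₁ hQ
    (laplacian_laplacian_bilinear _) lower
  refine ⟨u, hu, hpos, fun x ↦ ?_, ?_, ?_, ?_⟩
  · rw [laplacian_eq_mathlib_laplacian, laplacian_eq_mathlib_laplacian, heq]
  · refine not_radial_of_asymptotic_to hQ.continuous hQs hasymp hd₀ (hd.trans he.symm) ?_
    simpa [hQe, hQd, he, hd] using hκ.ne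
  · exact liminf_div_norm_sq_eq hQ.continuous hQs hasymp hd₀ lower hQd
  · exact limsup_div_norm_sq_eq hQ.continuous hQs hasymp he₀ upper hQe
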